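/- arXiv:1912.08328 — 3 statements merged into one kernel-verified Lean document; each statement's English description precedes it below -/
import Mathlib

section
/- Let 0 < η < e^{−1}, let H be a graph on k vertices with at least one edge, and set λ = η^{1−1/|E(H)|} / (5 log(1/η)), where |E(H)| is the number of edges of H. Then for all n sufficiently large (in terms of η and H), every graph G on n vertices containing at least η n^k labeled copies of H (i.e., at least η n^k injective maps from V(H) to V(G) sending every edge of H to an edge of G) contains a copy of the blowup H[t] with t = ⌊λ log n⌋. -/
/-- The `n`-blowup of a graph: each vertex is replaced by an independent set of `n` vertices,
and each edge by a complete bipartite graph between the corresponding sets. -/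
def blowupGraph {V : Type} (G : SimpleGraph V) (n : ℕ) : SimpleGraph (V × Fin n) :=
  SimpleGraph.comap Prod.fst G

/-- The coloring `C` admits a monochromatic copy of `H` in `G`. -/
def HasMonoCopy {V α : Type} (G : SimpleGraph V) (H : SimpleGraph α) {r : ℕ}
    (C : Sym2 V → Fin r) : Prop :=
  ∃ (f : α → V) (c : Fin r), Function.Injective f ∧
    ∀ a b, H.Adj a b → G.Adj (f a) (f b) ∧ C s(f a, f b) = c

/-- `G →_r H`: every `r`-coloring of the edges of `G` contains a monochromatic copy of `H`. -/
def ArrowsFor {V α : Type} (G : SimpleGraph V) (H : SimpleGraph α) (r : ℕ) : Prop :=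
  ∀ C : Sym2 V → Fin r, HasMonoCopy G H C

/-- The coloring `C` of `G[n]` admits a monochromatic canonical copy of `H[t]`:
an embedding `φ` of `H` into `G`, together with `t` blowup vertices `ψ a` in the part indexed
by `φ a` for each vertex `a` of `H`, all of whose blowup edges receive the same color `c`. -/
def HasMonoCanonicalBlowup {V α : Type} (G : SimpleGraph V) (H : SimpleGraph α)
    (n t r : ℕ) (C : Sym2 (V × Fin n) → Fin r) : Prop :=
  ∃ (φ : α → V) (ψ : α → Fin t → Fin n) (c : Fin r),
    Function.Injective φ ∧ (∀ a, Function.Injective (ψ a)) ∧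
    ∀ a b, H.Adj a b → G.Adj (φ a) (φ b) ∧ ∀ i j, C s((φ a, ψ a i), (φ b, ψ b j)) = c

/-- Every `r`-coloring of the edges of `G[n]` contains a monochromatic canonical copy of `H[t]`.
The blowup Ramsey number `B_r(G → H; t)` is the minimum such `n`. -/
def BlowupArrow {V α : Type} (G : SimpleGraph V) (H : SimpleGraph α) (r n t : ℕ) : Prop :=
  ∀ C : Sym2 (V × Fin n) → Fin r, HasMonoCanonicalBlowup G H n t r C

/-- `G` contains a copy of `H` (an injective map preserving adjacency). -/
def ContainsCopy {α V : Type} (H : SimpleGraph α) (G : SimpleGraph V) : Prop :=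
  ∃ f : α → V, Function.Injective f ∧ ∀ a b, H.Adj a b → G.Adj (f a) (f b)


section Aux
open Finset

lemma exists_matching_avg {ι β : Type} [Nonempty β] (J : Finset ι) (U : Finset β) (hc : #J ≤ #U)
    (f : ι → β → ℝ) : ∃ u : ι → β, (∀ j ∈ J, u j ∈ U) ∧ Set.InjOn u J ∧
      ∑ j ∈ J, ∑ y ∈ U, f j y ≤ #U * ∑ j ∈ J, f j (u j) := by
  classical
  rcases Finset.eq_empty_or_nonempty U with rfl | hU
  · have : J = ∅ := by simpa using hc
    subst this
    exact ⟨fun _ => Classical.arbitrary β, by simp, by simp, by simp⟩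
  have hpos : 0 < #U := hU.card_pos
  have : NeZero #U := ⟨hpos.ne'⟩
  let eU : Fin #U ≃ U := U.equivFin.symm
  have hJ : ∃ p : ι → Fin #U, Set.InjOn p J := by
    let eJ := J.equivFin
    refine ⟨fun i => if h : i ∈ J then Fin.castLE hc (eJ ⟨i, h⟩) else 0, ?_⟩
    intro a ha b hb hab
    have ha' : a ∈ J := ha
    have hb' : b ∈ J := hb
    simp only [ha', hb', dite_true] at hab
    have := eJ.injective (Fin.castLE_injective hc hab)
    simpa using this
  obtain ⟨p, hp⟩ := hJ
  have key : ∑ r : Fin #U, ∑ j ∈ J, f j (eU (p j + r)) = ∑ j ∈ J, ∑ y ∈ U, f j y := by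
    rw [Finset.sum_comm]
    refine Finset.sum_congr rfl fun j _ => ?_
    rw [← Finset.sum_coe_sort U (fun y => f j y)]
    exact Fintype.sum_equiv ((Equiv.addLeft (p j)).trans eU) _ _ (fun r => by simp)
  have : ∃ r ∈ (univ : Finset (Fin #U)), (∑ j ∈ J, ∑ y ∈ U, f j y) / #U ≤
      ∑ j ∈ J, f j (eU (p j + r)) := by
    apply Finset.exists_le_of_sum_le (by exact ⟨0, by simp⟩)
    rw [key]
    simp only [sum_const, card_univ, Fintype.card_fin, nsmul_eq_mul]
    have : (#U : ℝ) ≠ 0 := by positivity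
    rw [mul_div_cancel₀ _ this]
  obtain ⟨r, _, hr⟩ := this
  refine ⟨fun j => eU (p j + r), fun j _ => (eU _).2, ?_, ?_⟩
  · intro a ha b hb hab
    apply hp ha hb
    have := eU.injective (Subtype.ext hab)
    simpa using this
  · rw [div_le_iff₀ (by positivity)] at hr
    linarith

lemma lossy_step {ι β : Type} [Nonempty β] (s : ℕ) (J : Finset ι) (hJ : #J ≤ s) (V : Finset β)
    (hV : V.Nonempty) (f : ι → β → ℝ) (h0 : ∀ j v, 0 ≤ f j v)
    (h1 : ∀ j v, f j v ≤ 1) (τ δ : ℝ) (hτ : τ * #V ≤ ∑ j ∈ J, ∑ v ∈ V, f j v)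
    (hδ : (2:ℝ) ^ s * s ^ 2 ≤ δ * #V) :
    ∃ J' ⊆ J, ∃ u : ι → β, (∀ j ∈ J', u j ∈ V) ∧ Set.InjOn u J' ∧
      (∀ i ∈ J', ∀ j ∈ J', 0 < f i (u j)) ∧ τ - δ ≤ ∑ j ∈ J', f j (u j) := by
  classical
  by_cases hneg : τ - δ ≤ 0
  · exact ⟨∅, by simp, fun _ => Classical.arbitrary β, by simp, by simp, by simp, by simpa using hneg⟩
  push Not at hneg
  have hVp : (0:ℝ) < #V := by exact_mod_cast hV.card_pos
  let T : β → Finset ι := fun v => J.filter (fun j => 0 < f j v)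
  let W : Finset ι → Finset β := fun A => V.filter (fun v => T v = A)
  have hfib : ∑ A ∈ J.powerset, ∑ v ∈ W A, ∑ j ∈ J, f j v = ∑ j ∈ J, ∑ v ∈ V, f j v := by
    rw [Finset.sum_comm (s := J)]
    exact Finset.sum_fiberwise_of_maps_to (fun v _ => by simp [T]) _
  have hcardfib : ∑ A ∈ J.powerset, (#(W A) : ℝ) = #V := by
    rw [Finset.card_eq_sum_card_fiberwise (f := T) (s := V) (t := J.powerset)
      (fun v _ => Finset.mem_coe.2 (Finset.mem_powerset.2 (Finset.filter_subset _ _)))]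
    push_cast; rfl
  have hT : ∀ A v, v ∈ W A → ∑ j ∈ J, f j v = ∑ j ∈ A, f j v := by
    intro A v hv
    have : T v = A := (Finset.mem_filter.1 hv).2
    rw [← this]
    simp only [T]
    rw [Finset.sum_filter]
    refine Finset.sum_congr rfl fun j _ => ?_
    split_ifs with h
    · rfl
    · exact le_antisymm (not_lt.1 h) (h0 _ _)
  have hex : ∃ A ∈ J.powerset, s ≤ #(W A) ∧ (W A).Nonempty ∧ (τ - δ) * #(W A) ≤ ∑ v ∈ W A, ∑ j ∈ J, f j v := by
    by_contra hcon
    push Not at hcon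
    have hterm : ∀ A ∈ J.powerset, ∑ v ∈ W A, ∑ j ∈ J, f j v ≤ (τ - δ) * #(W A) + s * s := by
      intro A hA
      by_cases hs : s ≤ #(W A)
      · rcases (W A).eq_empty_or_nonempty with he | hne
        · rw [he]; simp; positivity
        · have := hcon A hA hs hne
          nlinarith [sq_nonneg (s:ℝ)]
      · have : ∑ v ∈ W A, ∑ j ∈ J, f j v ≤ ∑ v ∈ W A, (s : ℝ) := by
          refine Finset.sum_le_sum fun v _ => ?_
          calc ∑ j ∈ J, f j v ≤ ∑ j ∈ J, (1:ℝ) := Finset.sum_le_sum fun j _ => h1 _ _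
            _ = #J := by simp
            _ ≤ s := by exact_mod_cast hJ
        simp only [sum_const, nsmul_eq_mul] at this
        have h2 : (#(W A) : ℝ) ≤ s := by exact_mod_cast (not_le.1 hs).le
        have h3 : 0 ≤ (τ - δ) * #(W A) := by positivity
        nlinarith [sq_nonneg (s:ℝ), Nat.cast_nonneg (α := ℝ) s]
    by_cases hs0 : s = 0
    · have hJ0 : J = ∅ := by subst hs0; simpa using hJ
      subst hJ0
      simp at hτ
      subst hs0
      simp at hδ
      have : 0 ≤ δ := nonneg_of_mul_nonneg_left hδ hVp
      nlinarith
    have hlt : ∑ A ∈ J.powerset, ∑ v ∈ W A, ∑ j ∈ J, f j v <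
        ∑ A ∈ J.powerset, ((τ - δ) * #(W A) + s * s) := by
      obtain ⟨v, hv⟩ := hV
      refine Finset.sum_lt_sum hterm ⟨T v, by simp [T], ?_⟩
      have hvW : v ∈ W (T v) := by simp [W, hv]
      have hsp : (0:ℝ) < s := by exact_mod_cast Nat.pos_of_ne_zero hs0
      by_cases hs : s ≤ #(W (T v))
      · have := hcon (T v) (by simp [T]) hs ⟨v, hvW⟩
        nlinarith
      · have : ∑ v ∈ W (T v), ∑ j ∈ J, f j v ≤ ∑ v ∈ W (T v), (s : ℝ) := by
          refine Finset.sum_le_sum fun v _ => ?_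
          calc ∑ j ∈ J, f j v ≤ ∑ j ∈ J, (1:ℝ) := Finset.sum_le_sum fun j _ => h1 _ _
            _ = #J := by simp
            _ ≤ s := by exact_mod_cast hJ
        simp only [sum_const, nsmul_eq_mul] at this
        have h2 : (#(W (T v)) : ℝ) ≤ s := by exact_mod_cast (not_le.1 hs).le
        have h4 : (0:ℝ) < #(W (T v)) := by exact_mod_cast Finset.card_pos.2 ⟨v, hvW⟩
        have h3 : 0 < (τ - δ) * #(W (T v)) := by positivity
        nlinarith
    rw [hfib, Finset.sum_add_distrib, ← Finset.mul_sum, hcardfib] at hlt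
    simp only [sum_const, card_powerset, nsmul_eq_mul] at hlt
    have : ((2 ^ #J : ℕ) : ℝ) ≤ 2 ^ s := by
      push_cast
      exact pow_le_pow_right₀ (by norm_num) hJ
    nlinarith [mul_le_mul_of_nonneg_right this (sq_nonneg (s:ℝ))]
  obtain ⟨A, hA, hs, hne, hsum⟩ := hex
  have hAJ := Finset.mem_powerset.1 hA
  obtain ⟨u, hu, hinj, hle⟩ := exists_matching_avg A (W A)
    ((Finset.card_le_card hAJ).trans (hJ.trans hs)) f
  refine ⟨A, hAJ, u, fun j hj => (Finset.mem_filter.1 (hu j hj)).1, hinj, ?_, ?_⟩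
  · intro i hi j hj
    have := (Finset.mem_filter.1 (hu j hj)).2
    rw [← this] at hi
    exact (Finset.mem_filter.1 hi).2
  · rw [Finset.sum_congr rfl (hT A), Finset.sum_comm] at hsum
    have hp : (0:ℝ) < #(W A) := by exact_mod_cast hne.card_pos
    have := hsum.trans hle
    rw [mul_comm] at this
    exact le_of_mul_le_mul_left this hp


lemma card_not_injective_le {β : Type} (X : Finset β) (s : ℕ) [DecidablePred fun x : Fin s → β => Function.Injective x] :
    (#((Fintype.piFinset fun _ : Fin s => X).filter (fun x => ¬ Function.Injective x)) : ℝ)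
      * #X ≤ s ^ 2 * (#X : ℝ) ^ s := by
  classical
  have hsub : ((Fintype.piFinset fun _ : Fin s => X).filter (fun x => ¬ Function.Injective x)) ⊆
      (univ : Finset (Fin s × Fin s)).biUnion fun ij =>
        (Fintype.piFinset fun _ : Fin s => X).filter (fun x => ij.1 ≠ ij.2 ∧ x ij.1 = x ij.2) := by
    intro x hx
    rw [Finset.mem_filter] at hx
    obtain ⟨hx, hni⟩ := hx
    rw [Function.not_injective_iff] at hni
    obtain ⟨i, j, hij, hne⟩ := hni
    simp only [mem_biUnion, mem_univ, true_and, mem_filter]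
    exact ⟨(i, j), hx, hne, hij⟩
  have hone : ∀ ij : Fin s × Fin s,
      #((Fintype.piFinset fun _ : Fin s => X).filter
        (fun x => ij.1 ≠ ij.2 ∧ x ij.1 = x ij.2)) * #X ≤ #X ^ s := by
    rintro ⟨i, j⟩
    by_cases hij : i = j
    · simp [hij]
    have : #X ^ s = #(Fintype.piFinset fun _ : Fin s => X) := by simp
    rw [this, ← Finset.card_product]
    refine Finset.card_le_card_of_injOn (fun p => Function.update p.1 i p.2) ?_ ?_
    · rintro ⟨x, v⟩ hp
      simp only [coe_product, Set.mem_prod, mem_coe, mem_filter, Fintype.mem_piFinset] at hp ⊢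
      intro l
      by_cases hl : l = i
      · subst hl; simpa using hp.2
      · simpa [Function.update_of_ne hl] using hp.1.1 l
    · rintro ⟨x, v⟩ hp ⟨x', v'⟩ hp' heq
      simp only [coe_product, Set.mem_prod, mem_coe, mem_filter, Fintype.mem_piFinset] at hp hp' heq
      have hl : ∀ l, l ≠ i → x l = x' l := fun l hl => by
        simpa [Function.update_of_ne hl] using congrFun heq l
      have hv : v = v' := by simpa using congrFun heq i
      have hx : x = x' := by
        funext l
        by_cases h : l = i
        · subst h
          rw [hp.1.2.2, hp'.1.2.2]
          exact hl j (fun h => hij h.symm)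
        · exact hl l h
      rw [hx, hv]
  have h1 := (Finset.card_le_card hsub).trans Finset.card_biUnion_le
  have h2 := Nat.mul_le_mul_right #X h1
  rw [Finset.sum_mul] at h2
  have h3 := h2.trans (Finset.sum_le_sum fun ij _ => hone ij)
  simp only [sum_const, card_univ, Fintype.card_prod, Fintype.card_fin, smul_eq_mul] at h3
  have h4 : (#((Fintype.piFinset fun _ : Fin s => X).filter (fun x => ¬ Function.Injective x)) * #X : ℕ)
      ≤ s ^ 2 * #X ^ s := by rw [sq]; exact h3
  exact_mod_cast h4

lemma first_step {β : Type} [Nonempty β] (X Y : Finset β) (R : β → β → Prop) (w : β → β → ℝ)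
    (hX : X.Nonempty) (hY : Y.Nonempty)
    [DecidableRel R]
    (hw0 : ∀ x y, 0 ≤ w x y) (hw1 : ∀ x y, w x y ≤ if R x y then 1 else 0) (θ κ : ℝ) (hθ : 0 ≤ θ)
    (hκ : 0 < κ) (hsum : κ * #X * #Y ≤ ∑ y ∈ Y, ∑ x ∈ X, (w x y - θ * if R x y then 1 else 0))
    (s : ℕ) (hs : 0 < s) (hlarge : (s : ℝ) ^ 2 / #X + s / #Y < κ ^ s) :
    ∃ x y : Fin s → β, (∀ i, x i ∈ X) ∧ (∀ i, y i ∈ Y) ∧ Function.Injective x ∧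
      Function.Injective y ∧ (∀ i j, R (x i) (y j)) ∧ θ * s ≤ ∑ i, w (x i) (y i) := by
  classical
  set h : β → β → ℝ := fun x y => w x y - θ * if R x y then 1 else 0 with hh
  set ind : β → β → ℝ := fun x y => if R x y then 1 else 0 with hind
  have hhind : ∀ x y, h x y ≤ ind x y := by
    intro x y
    have := hw1 x y
    simp only [hh, hind]
    have h2 : 0 ≤ θ * (if R x y then (1:ℝ) else 0) := by split_ifs <;> simp [hθ]
    linarith
  have hh0 : ∀ x y, ¬ R x y → h x y = 0 := by
    intro x y hR
    have h1 := hw1 x y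
    have h2 := hw0 x y
    simp only [hR, if_false] at h1
    simp [hh, hR]; linarith
  set g : β → ℝ := fun y => ∑ x ∈ X, h x y with hg
  set dg : β → ℝ := fun y => ∑ x ∈ X, ind x y with hdg
  have hgd : ∀ y, g y ≤ dg y := fun y => Finset.sum_le_sum fun x _ => hhind x y
  set Yp := Y.filter (fun y => 0 ≤ g y) with hYp
  set Ω := Fintype.piFinset fun _ : Fin s => X with hΩ
  set N : (Fin s → β) → Finset β := fun x => Yp.filter (fun y => ∀ i, R (x i) y) with hN
  set F : (Fin s → β) → ℝ := fun x => ∑ y ∈ N x, ∑ i, h (x i) y with hF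
  have hXp : (0:ℝ) < #X := by exact_mod_cast hX.card_pos
  have hYpos : (0:ℝ) < #Y := by exact_mod_cast hY.card_pos
  have hsp : (0:ℝ) < s := by exact_mod_cast hs
  have hYle : #Yp ≤ #Y := Finset.card_le_card (Finset.filter_subset _ _)
  have hFsum : ∑ x ∈ Ω, F x = s * ∑ y ∈ Yp, g y * dg y ^ (s - 1) := by
    have e1 : ∀ x ∈ Ω, F x = ∑ y ∈ Yp, ∑ i : Fin s, ∏ l : Fin s,
        (if l = i then h (x l) y else ind (x l) y) := by
      intro x _
      simp only [hF, hN]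
      rw [Finset.sum_filter]
      refine Finset.sum_congr rfl fun y _ => ?_
      split_ifs with hall
      · refine Finset.sum_congr rfl fun i _ => ?_
        rw [Finset.prod_eq_single i]
        · simp
        · intro l _ hl; simp [hl, hind, hall l]
        · simp
      · push Not at hall
        obtain ⟨l, hl⟩ := hall
        symm
        refine Finset.sum_eq_zero fun i _ => Finset.prod_eq_zero (Finset.mem_univ l) ?_
        split_ifs
        · exact hh0 _ _ hl
        · simp [hind, hl]
    rw [Finset.sum_congr rfl e1, Finset.sum_comm, Finset.mul_sum]
    refine Finset.sum_congr rfl fun y _ => ?_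
    rw [Finset.sum_comm]
    have e2 : ∀ i : Fin s, ∑ x ∈ Ω, ∏ l : Fin s, (if l = i then h (x l) y else ind (x l) y)
        = g y * dg y ^ (s - 1) := by
      intro i
      rw [hΩ, ← Finset.prod_univ_sum (fun _ : Fin s => X)
        (fun l v => if l = i then h v y else ind v y)]
      rw [← Finset.mul_prod_erase _ _ (Finset.mem_univ i)]
      congr 1
      · simp [hg]
      · rw [Finset.prod_congr rfl (g := fun _ => dg y)]
        · simp
        · intro l hl
          simp [Finset.ne_of_mem_erase hl, hdg]
    rw [Finset.sum_congr rfl fun i _ => e2 i]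
    simp
  have hjen : κ ^ s * (#X : ℝ) ^ s * #Y ≤ ∑ y ∈ Yp, g y * dg y ^ (s - 1) := by
    have h1 : ∑ y ∈ Yp, g y ^ s ≤ ∑ y ∈ Yp, g y * dg y ^ (s - 1) := by
      refine Finset.sum_le_sum fun y hy => ?_
      have hy0 : 0 ≤ g y := (Finset.mem_filter.1 hy).2
      calc g y ^ s = g y * g y ^ (s - 1) := by rw [mul_pow_sub_one hs.ne']
        _ ≤ _ := by gcongr; exact hgd y
    refine le_trans ?_ h1
    have h2 : κ * #X * #Y ≤ ∑ y ∈ Yp, g y := by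
      refine hsum.trans ?_
      rw [hYp, Finset.sum_filter]
      refine Finset.sum_le_sum fun y _ => ?_
      split_ifs with hc
      · exact le_rfl
      · exact (not_le.1 hc).le
    have h3 := pow_sum_div_card_le_sum_pow (s := Yp) (f := g)
      (fun y hy => (Finset.mem_filter.1 hy).2) (s - 1)
    rw [Nat.sub_add_cancel hs] at h3
    refine le_trans ?_ h3
    have hYpp : (0:ℝ) < #Yp := by
      rcases Yp.eq_empty_or_nonempty with he | hne
      · rw [he] at h2
        simp at h2
        have : 0 < κ * #X * #Y := by positivity
        linarith
      · exact_mod_cast hne.card_pos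
    rw [le_div_iff₀ (by positivity)]
    calc κ ^ s * (#X : ℝ) ^ s * #Y * (#Yp : ℝ) ^ (s - 1)
        ≤ κ ^ s * (#X : ℝ) ^ s * #Y * (#Y : ℝ) ^ (s - 1) := by gcongr
      _ = (κ * #X * #Y) ^ s := by
          rw [mul_assoc, mul_pow_sub_one hs.ne', mul_pow, mul_pow]
      _ ≤ _ := by gcongr
  have hFle : ∀ x, F x ≤ s * #(N x) := by
    intro x
    calc F x ≤ ∑ y ∈ N x, ∑ i : Fin s, (1:ℝ) := by
          refine Finset.sum_le_sum fun y _ => Finset.sum_le_sum fun i _ => (hhind _ _).trans ?_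
          simp only [hind]; split_ifs <;> simp
      _ = _ := by simp [mul_comm]
  have hex : ∃ x ∈ Ω, Function.Injective x ∧ s ≤ #(N x) ∧ 0 ≤ F x := by
    by_contra hcon
    push Not at hcon
    have hb : ∀ x ∈ Ω, F x ≤ s * s + (if ¬ Function.Injective x then (s : ℝ) * #Y else 0) := by
      intro x hx
      by_cases hi : Function.Injective x
      · simp only [hi, not_true, if_false, add_zero]
        by_cases hsN : s ≤ #(N x)
        · exact (hcon x hx hi hsN).le.trans (by positivity)
        · refine (hFle x).trans ?_
          have : (#(N x) : ℝ) ≤ s := by exact_mod_cast (not_le.1 hsN).le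
          gcongr
      · simp only [hi, not_false_iff, if_true]
        refine (hFle x).trans ?_
        have : (#(N x) : ℝ) ≤ #Y := by
          exact_mod_cast (Finset.card_le_card (Finset.filter_subset _ _)).trans hYle
        nlinarith
    have h1 := Finset.sum_le_sum hb
    rw [hFsum, Finset.sum_add_distrib, ← Finset.sum_filter] at h1
    simp only [sum_const, nsmul_eq_mul] at h1
    have hΩc : (#Ω : ℝ) = (#X : ℝ) ^ s := by simp [hΩ]
    rw [hΩc] at h1
    have h2 := card_not_injective_le X s
    have h3 : s * (κ ^ s * (#X : ℝ) ^ s * #Y) ≤ s * ∑ y ∈ Yp, g y * dg y ^ (s - 1) := by gcongr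
    set B : ℝ := (#(Ω.filter fun x => ¬ Function.Injective x) : ℝ) with hB
    have h2' : B ≤ s ^ 2 / #X * (#X : ℝ) ^ s := by
      rw [div_mul_eq_mul_div, le_div_iff₀ hXp]; exact h2
    have h4 : B * (s * #Y) ≤ s ^ 2 / #X * (#X : ℝ) ^ s * (s * #Y) := by gcongr
    have h5 : (#X : ℝ) ^ s * (s * s) = s / #Y * (#X : ℝ) ^ s * (s * #Y) := by field_simp
    have h6 : ((s : ℝ) ^ 2 / #X + s / #Y) * ((#X : ℝ) ^ s * (s * #Y)) < κ ^ s * ((#X : ℝ) ^ s * (s * #Y)) := by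
      gcongr
    nlinarith
  obtain ⟨x, hxΩ, hxi, hsN, hFx⟩ := hex
  obtain ⟨y, hyN, hyi, hle⟩ := exists_matching_avg (univ : Finset (Fin s)) (N x) (by simpa using hsN)
    (fun i y => h (x i) y)
  have hR : ∀ i j, R (x i) (y j) := fun i j => (Finset.mem_filter.1 (hyN j (mem_univ _))).2 i
  refine ⟨x, y, fun i => Fintype.mem_piFinset.1 hxΩ i,
    fun i => (Finset.mem_filter.1 (Finset.mem_filter.1 (hyN i (mem_univ _))).1).1, hxi,
    fun a b hab => hyi (by simp) (by simp) hab, hR, ?_⟩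
  rw [Finset.sum_comm] at hle
  have hpos : (0:ℝ) < #(N x) := by exact_mod_cast lt_of_lt_of_le hs hsN
  have h7 : 0 ≤ ∑ i, h (x i) (y i) := by
    by_contra hneg
    have := mul_neg_of_pos_of_neg hpos (not_le.1 hneg)
    have h8 := hFx.trans hle
    linarith
  simp only [hh, hR, if_true, mul_one, Finset.sum_sub_distrib, sum_const, card_univ,
    Fintype.card_fin, nsmul_eq_mul] at h7
  linarith


lemma pi_average {α β : Type} [Fintype α] [DecidableEq α] (V : α → Finset β) (a : α)
    (Φ : (α → β) → ℝ) :
    ∑ f ∈ Fintype.piFinset V, ∑ x ∈ V a, Φ (Function.update f a x) =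
      #(V a) * ∑ f ∈ Fintype.piFinset V, Φ f := by
  classical
  have h : (#(V a) : ℝ) * ∑ f ∈ Fintype.piFinset V, Φ f =
      ∑ f ∈ Fintype.piFinset V, ∑ x ∈ V a, Φ f := by
    simp [Finset.mul_sum]
  rw [h, ← Finset.sum_product', ← Finset.sum_product']
  refine Finset.sum_nbij' (fun p => (Function.update p.1 a p.2, p.1 a))
    (fun p => (Function.update p.1 a p.2, p.1 a)) ?_ ?_ ?_ ?_ ?_
  · rintro ⟨f, x⟩ hp
    simp only [mem_product, Fintype.mem_piFinset] at hp ⊢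
    refine ⟨fun l => ?_, hp.1 a⟩
    by_cases hl : l = a
    · subst hl; simpa using hp.2
    · simpa [hl] using hp.1 l
  · rintro ⟨f, x⟩ hp
    simp only [mem_product, Fintype.mem_piFinset] at hp ⊢
    refine ⟨fun l => ?_, hp.1 a⟩
    by_cases hl : l = a
    · subst hl; simpa using hp.2
    · simpa [hl] using hp.1 l
  · rintro ⟨f, x⟩ hp; simp
  · rintro ⟨f, x⟩ hp; simp
  · rintro ⟨f, x⟩ hp; simp

lemma bilinear_uniform {β : Type} [DecidableEq β] (G : SimpleGraph β) [DecidableRel G.Adj] (ε : ℝ)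
    (hε0 : 0 < ε) (A B : Finset β) (hU : G.IsUniform ε A B) (p q : β → Prop) [DecidablePred p]
    [DecidablePred q] :
    |∑ x ∈ A, ∑ y ∈ B, ((if G.Adj x y then (1:ℝ) else 0) - (G.edgeDensity A B : ℝ)) *
      (if p x ∧ q y then 1 else 0)| ≤ ε * (#A * #B) := by
  classical
  set A' := A.filter p with hA'
  set B' := B.filter q with hB'
  set d : ℝ := (G.edgeDensity A B : ℝ) with hd
  have hd0 : 0 ≤ d := by rw [hd]; exact_mod_cast G.edgeDensity_nonneg A B
  have hd1 : d ≤ 1 := by rw [hd]; exact_mod_cast G.edgeDensity_le_one A B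
  have hE : (#(G.interedges A' B') : ℝ) = ∑ x ∈ A', ∑ y ∈ B', (if G.Adj x y then (1:ℝ) else 0) := by
    rw [← Finset.sum_product', SimpleGraph.interedges_def]
    simp
  have hsum : ∑ x ∈ A, ∑ y ∈ B, ((if G.Adj x y then (1:ℝ) else 0) - d) *
      (if p x ∧ q y then 1 else 0) = #(G.interedges A' B') - d * (#A' * #B') := by
    have : ∑ x ∈ A', ∑ y ∈ B', ((if G.Adj x y then (1:ℝ) else 0) - d) =
        #(G.interedges A' B') - d * (#A' * #B') := by
      simp only [Finset.sum_sub_distrib, sum_const, nsmul_eq_mul]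
      rw [hE]; ring
    rw [← this, hA', hB', Finset.sum_filter]
    refine Finset.sum_congr rfl fun x _ => ?_
    rw [Finset.sum_filter]
    by_cases hp : p x <;> simp [hp]
  rw [hsum]
  have hcA : (#A' : ℝ) ≤ #A := by exact_mod_cast Finset.card_le_card (Finset.filter_subset _ _)
  have hcB : (#B' : ℝ) ≤ #B := by exact_mod_cast Finset.card_le_card (Finset.filter_subset _ _)
  have hinter : (#(G.interedges A' B') : ℝ) ≤ #A' * #B' := by
    exact_mod_cast G.card_interedges_le_mul A' B'
  have htriv : |(#(G.interedges A' B') : ℝ) - d * (#A' * #B')| ≤ #A' * #B' := by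
    have h0 : (0:ℝ) ≤ #A' * #B' := by positivity
    have h0' : (0:ℝ) ≤ #(G.interedges A' B') := by positivity
    rw [abs_le]
    constructor <;> nlinarith
  by_cases h1 : (#A : ℝ) * ε ≤ #A'
  · by_cases h2 : (#B : ℝ) * ε ≤ #B'
    · have hu := hU (Finset.filter_subset p A) (Finset.filter_subset q B) h1 h2
      have hdens : (G.edgeDensity A' B' : ℝ) * (#A' * #B') = #(G.interedges A' B') := by
        rw [SimpleGraph.edgeDensity_def]
        push_cast
        by_cases hz : (#A' : ℝ) * #B' = 0
        · have : (#(G.interedges A' B') : ℝ) = 0 := le_antisymm (hz ▸ hinter) (by positivity)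
          rw [this, hz]; simp
        · rw [div_mul_cancel₀ _ hz]
      rw [← hdens, ← sub_mul, abs_mul, abs_of_nonneg (a := (#A' : ℝ) * #B') (by positivity)]
      gcongr
    · refine htriv.trans ?_
      have := (not_le.1 h2).le
      calc (#A' : ℝ) * #B' ≤ #A * (#B * ε) := by gcongr
        _ = _ := by ring
  · refine htriv.trans ?_
    have := (not_le.1 h1).le
    calc (#A' : ℝ) * #B' ≤ (#A * ε) * #B := by gcongr
      _ = _ := by ring

/-- density of the pair attached to an edge of the pattern -/
noncomputable def pairDensity {α β : Type} [DecidableEq β] (G : SimpleGraph β) [DecidableRel G.Adj]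
    (V : α → Finset β) : Sym2 α → ℝ :=
  Sym2.lift ⟨fun a b => (G.edgeDensity (V a) (V b) : ℝ), fun a b => by
    simp only [SimpleGraph.edgeDensity_comm G (V a) (V b)]⟩

lemma counting {α β : Type} [Fintype α] [DecidableEq α] [DecidableEq β] (G : SimpleGraph β)
    [DecidableRel G.Adj] [DecidablePred (· ∈ G.edgeSet)] (ε : ℝ) (hε0 : 0 < ε) (V : α → Finset β)
    (hV : ∀ a, (V a).Nonempty)
    (F : Finset (Sym2 α)) (hF : ∀ a b, s(a, b) ∈ F → a ≠ b ∧ G.IsUniform ε (V a) (V b)) :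
    |(#((Fintype.piFinset V).filter fun f => ∀ e ∈ F, Sym2.map f e ∈ G.edgeSet) : ℝ)
      - (∏ e ∈ F, pairDensity G V e) * ∏ a, (#(V a) : ℝ)| ≤ #F * ε * ∏ a, (#(V a) : ℝ) := by
  classical
  induction F using Finset.induction_on with
  | empty => simp [Fintype.card_piFinset]
  | insert e F heF ih =>
    have ih' := ih (fun a b h => hF a b (Finset.mem_insert_of_mem h))
    induction e using Sym2.ind with
    | _ a b =>
    obtain ⟨hab, hU⟩ := hF a b (Finset.mem_insert_self _ _)
    set Q : ℝ := ∏ a, (#(V a) : ℝ) with hQ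
    have hQ0 : 0 ≤ Q := Finset.prod_nonneg fun _ _ => Nat.cast_nonneg _
    set d : ℝ := (G.edgeDensity (V a) (V b) : ℝ) with hd
    have hd0 : 0 ≤ d := by rw [hd]; exact_mod_cast G.edgeDensity_nonneg (V a) (V b)
    have hd1 : d ≤ 1 := by rw [hd]; exact_mod_cast G.edgeDensity_le_one (V a) (V b)
    have hpd : pairDensity G V s(a, b) = d := rfl
    set Ψ : (α → β) → ℝ := fun f => if ∀ e ∈ F, Sym2.map f e ∈ G.edgeSet then 1 else 0 with hΨ
    set Θ : (α → β) → ℝ := fun f => ((if G.Adj (f a) (f b) then (1:ℝ) else 0) - d) * Ψ f with hΘ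
    have e1 : (#((Fintype.piFinset V).filter fun f => ∀ e ∈ F, Sym2.map f e ∈ G.edgeSet) : ℝ) =
        ∑ f ∈ Fintype.piFinset V, Ψ f := by simp [hΨ]
    have e2 : (#((Fintype.piFinset V).filter fun f => ∀ e ∈ insert s(a,b) F, Sym2.map f e ∈ G.edgeSet) : ℝ) =
        ∑ f ∈ Fintype.piFinset V, (Θ f + d * Ψ f) := by
      rw [Finset.card_filter]
      push_cast
      refine Finset.sum_congr rfl fun f _ => ?_
      simp only [Finset.forall_mem_insert, Sym2.map_mk, SimpleGraph.mem_edgeSet, hΘ, hΨ]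
      by_cases h1 : G.Adj (f a) (f b) <;> by_cases h2 : ∀ e ∈ F, Sym2.map f e ∈ G.edgeSet
      · rw [if_pos ⟨h1, h2⟩, if_pos h1, if_pos h2]; ring
      · rw [if_neg (fun h => h2 h.2), if_neg h2]; ring
      · rw [if_neg (fun h => h1 h.1), if_neg h1, if_pos h2]; ring
      · rw [if_neg (fun h => h2 h.2), if_neg h2]; ring
    have hmain : |∑ f ∈ Fintype.piFinset V, Θ f| ≤ ε * Q := by
      have hpa := pi_average V b Θ
      have hpa2 := pi_average V a (fun f => ∑ y ∈ V b, Θ (Function.update f b y))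
      rw [hpa] at hpa2
      have hap : (0:ℝ) < #(V a) := by exact_mod_cast (hV a).card_pos
      have hbp : (0:ℝ) < #(V b) := by exact_mod_cast (hV b).card_pos
      have hbd : |∑ f ∈ Fintype.piFinset V, ∑ x ∈ V a, ∑ y ∈ V b,
          Θ (Function.update (Function.update f a x) b y)| ≤ Q * (ε * (#(V a) * #(V b))) := by
        refine (Finset.abs_sum_le_sum_abs _ _).trans ?_
        have : ∀ f ∈ Fintype.piFinset V, |∑ x ∈ V a, ∑ y ∈ V b,
          Θ (Function.update (Function.update f a x) b y)| ≤ ε * (#(V a) * #(V b)) := by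
          intro f _
          have := bilinear_uniform G ε hε0 (V a) (V b) hU
            (fun x => ∀ e ∈ F, b ∉ e → Sym2.map (Function.update f a x) e ∈ G.edgeSet)
            (fun y => ∀ e ∈ F, b ∈ e → Sym2.map (Function.update f b y) e ∈ G.edgeSet)
          refine le_of_eq_of_le (congrArg _ ?_) this
          refine Finset.sum_congr rfl fun x _ => Finset.sum_congr rfl fun y _ => ?_
          have k1 : Function.update (Function.update f a x) b y a = x := by
            rw [Function.update_of_ne hab]; simp
          have k2 : Function.update (Function.update f a x) b y b = y := by simp
          simp only [hΘ, hΨ, k1, k2]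
          congr 1
          have hiff : (∀ e ∈ F, Sym2.map (Function.update (Function.update f a x) b y) e ∈ G.edgeSet) ↔
              ((∀ e ∈ F, b ∉ e → Sym2.map (Function.update f a x) e ∈ G.edgeSet) ∧
              (∀ e ∈ F, b ∈ e → Sym2.map (Function.update f b y) e ∈ G.edgeSet)) := by
            have m1 : ∀ e : Sym2 α, b ∉ e → Sym2.map (Function.update (Function.update f a x) b y) e
                = Sym2.map (Function.update f a x) e := by
              intro e hb
              refine Sym2.map_congr fun z hz => ?_
              have : z ≠ b := fun h => hb (h ▸ hz)
              simp [this]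
            have m2 : ∀ e ∈ F, b ∈ e → Sym2.map (Function.update (Function.update f a x) b y) e
                = Sym2.map (Function.update f b y) e := by
              intro e he hb
              refine Sym2.map_congr fun z hz => ?_
              have hza : z ≠ a := by
                rintro rfl
                have := (Sym2.mem_and_mem_iff hab).1 ⟨hz, hb⟩
                exact heF (this ▸ he)
              by_cases hzb : z = b
              · subst hzb; simp
              · simp [hza, hzb]
            constructor
            · intro h
              exact ⟨fun e he hb => m1 e hb ▸ h e he, fun e he hb => m2 e he hb ▸ h e he⟩
            · rintro ⟨h1, h2⟩ e he
              by_cases hb : b ∈ e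
              · rw [m2 e he hb]; exact h2 e he hb
              · rw [m1 e hb]; exact h1 e he hb
          exact if_congr hiff rfl rfl
        refine (Finset.sum_le_sum this).trans ?_
        simp [Fintype.card_piFinset, hQ]
      rw [hpa2, abs_mul, abs_mul, abs_of_pos hap, abs_of_pos hbp] at hbd
      have hpos : 0 < (#(V a) : ℝ) * #(V b) := by positivity
      refine le_of_mul_le_mul_left ?_ hpos
      nlinarith
    rw [e1] at ih'
    rw [e2, Finset.sum_add_distrib, ← Finset.mul_sum, Finset.prod_insert heF,
      Finset.card_insert_of_notMem heF, hpd]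
    set P := ∏ e ∈ F, pairDensity G V e
    set S := ∑ f ∈ Fintype.piFinset V, Ψ f
    have : ∑ f ∈ Fintype.piFinset V, Θ f + d * S - d * P * Q =
      ∑ f ∈ Fintype.piFinset V, Θ f + d * (S - P * Q) := by ring
    rw [this]
    refine (abs_add_le _ _).trans ?_
    rw [abs_mul, abs_of_nonneg hd0]
    have h3 : d * |S - P * Q| ≤ 1 * (#F * ε * Q) := by gcongr
    push_cast
    nlinarith


lemma card_pair_mem {α β : Type} [Fintype α] [DecidableEq α] [Fintype β] [DecidableEq β]
    (B : Finset (β × β)) (i j : α) (hij : i ≠ j) :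
    #((univ : Finset (α → β)).filter fun f => (f i, f j) ∈ B) * Fintype.card β ^ 2 ≤
      #B * Fintype.card β ^ Fintype.card α := by
  classical
  have h1 : Fintype.card β ^ 2 = #(univ : Finset (β × β)) := by simp [sq]
  have h2 : Fintype.card β ^ Fintype.card α = #(univ : Finset (α → β)) := by simp
  rw [h1, h2, ← Finset.card_product, ← Finset.card_product]
  refine Finset.card_le_card_of_injOn
    (fun p => ((p.1 i, p.1 j), Function.update (Function.update p.1 i p.2.1) j p.2.2)) ?_ ?_
  · rintro ⟨f, x, y⟩ hp
    simpa using hp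
  · rintro ⟨f, x, y⟩ _ ⟨f', x', y'⟩ _ heq
    simp only [Prod.mk.injEq] at heq
    obtain ⟨⟨hi, hj⟩, hu⟩ := heq
    have hy : y = y' := by simpa using congrFun hu j
    have hx : x = x' := by
      have := congrFun hu i
      simpa [Function.update_of_ne hij] using this
    have hf : f = f' := by
      funext l
      by_cases hl : l = j
      · rw [hl]; exact hj
      by_cases hl' : l = i
      · rw [hl']; exact hi
      have := congrFun hu l
      simpa [hl, hl'] using this
    rw [hf, hx, hy]

lemma regular_selection (α : Type) [Fintype α] [DecidableEq α] (ε : ℝ) (hε : 0 < ε) :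
    ∃ M : ℕ, 0 < M ∧ ∀ n : ℕ, M ≤ n → ∀ (G : SimpleGraph (Fin n)) [DecidableRel G.Adj]
      (S : Finset (α → Fin n)) (_ : ∀ f ∈ S, Function.Injective f) (η : ℝ)
      (_ : 0 < η - 5 * (Fintype.card α : ℝ) ^ 2 * ε)
      (_ : η * (n : ℝ) ^ Fintype.card α ≤ #S),
      ∃ V : α → Finset (Fin n), (∀ a b, a ≠ b → Disjoint (V a) (V b)) ∧
        (∀ a b, a ≠ b → G.IsUniform ε (V a) (V b)) ∧ (∀ a, n ≤ 2 * M * #(V a)) ∧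
        (η - 5 * (Fintype.card α : ℝ) ^ 2 * ε) * ∏ a, (#(V a) : ℝ) ≤
          #(S.filter fun f => ∀ a, f a ∈ V a) := by
  classical
  set l : ℕ := ⌈4 / ε⌉₊ with hl
  refine ⟨max (max l (SzemerediRegularity.bound ε l)) 1, by simp, ?_⟩
  set M := max (max l (SzemerediRegularity.bound ε l)) 1 with hM
  intro n hn G _ S hS η hc hη
  have hn0 : 0 < n := lt_of_lt_of_le (by simp [hM]) hn
  have : Nonempty (Fin n) := ⟨⟨0, hn0⟩⟩
  obtain ⟨P, hPe, hPl, hPb, hPu⟩ := szemeredi_regularity (G := G) (l := l) hε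
    (by rw [Fintype.card_fin]; exact le_trans (by simp [hM]) hn)
  have hPM : #P.parts ≤ M := hPb.trans (by simp [hM])
  set c := η - 5 * (Fintype.card α : ℝ) ^ 2 * ε with hcdef
  set k := Fintype.card α with hk
  set B : Finset (Fin n × Fin n) := P.parts.biUnion offDiag ∪
    (P.nonUniforms G ε).biUnion (fun (U, V) ↦ U ×ˢ V) with hB
  have hBc : (#B : ℝ) ≤ 5 * ε * (n : ℝ) ^ 2 := by
    have h1 := hPe.card_biUnion_offDiag_le (𝕜 := ℝ) hε
      ((Nat.le_ceil _).trans (by exact_mod_cast hPl))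
    have h2 := hPe.sum_nonUniforms_lt (𝕜 := ℝ) (G := G) univ_nonempty hε hPu
    simp only [card_univ, Fintype.card_fin] at h1 h2
    have h3 : (#B : ℝ) ≤ #(P.parts.biUnion offDiag) +
      #((P.nonUniforms G ε).biUnion (fun (U, V) ↦ U ×ˢ V)) := by
      exact_mod_cast Finset.card_union_le _ _
    have h4 : 0 ≤ ε * (n:ℝ) ^ 2 := by positivity
    linarith
  set S' := S.filter (fun f => ∀ i j, i ≠ j → (f i, f j) ∉ B) with hS'
  have hnR : (0:ℝ) < n := by exact_mod_cast hn0
  have hS'c : c * (n : ℝ) ^ k ≤ #S' := by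
    have hsub : S ⊆ S' ∪ (univ : Finset (α × α)).biUnion fun ij =>
        if ij.1 ≠ ij.2 then (univ : Finset (α → Fin n)).filter fun f => (f ij.1, f ij.2) ∈ B
        else ∅ := by
      intro f hf
      by_cases h : f ∈ S'
      · exact Finset.mem_union_left _ h
      · refine Finset.mem_union_right _ ?_
        simp only [hS', mem_filter, hf, true_and] at h
        push Not at h
        obtain ⟨i, j, hij, hm⟩ := h
        simp only [mem_biUnion, mem_univ, true_and]
        exact ⟨(i, j), by simp [hij, hm]⟩
    have h1 := (Finset.card_le_card hsub).trans ((Finset.card_union_le _ _).trans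
      (Nat.add_le_add_left Finset.card_biUnion_le _))
    have h1' : (#S : ℝ) ≤ #S' + ∑ ij : α × α, (#(if ij.1 ≠ ij.2 then
        (univ : Finset (α → Fin n)).filter fun f => (f ij.1, f ij.2) ∈ B else ∅) : ℝ) := by
      exact_mod_cast h1
    have h2 : ∀ ij : α × α, (#(if ij.1 ≠ ij.2 then
        (univ : Finset (α → Fin n)).filter fun f => (f ij.1, f ij.2) ∈ B else ∅) : ℝ) ≤
        5 * ε * (n : ℝ) ^ k := by
      rintro ⟨i, j⟩
      split_ifs with hij
      · have := card_pair_mem B i j hij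
        rw [Fintype.card_fin] at this
        have h3 : (#((univ : Finset (α → Fin n)).filter fun f => (f i, f j) ∈ B) : ℝ) * (n:ℝ)^2 ≤
          #B * (n:ℝ)^k := by exact_mod_cast this
        have h4 : (#B : ℝ) * (n:ℝ)^k ≤ 5 * ε * (n : ℝ) ^ 2 * (n:ℝ)^k := by gcongr
        have h5 : (0:ℝ) < (n:ℝ)^2 := by positivity
        refine le_of_mul_le_mul_right ?_ h5
        dsimp only
        linarith
      · simp; positivity
    have h3 := Finset.sum_le_sum fun ij (_ : ij ∈ (univ : Finset (α × α))) => h2 ij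
    simp only [sum_const, card_univ, Fintype.card_prod, nsmul_eq_mul] at h3
    push_cast at h3
    have h4 : c * (n:ℝ)^k = η * (n:ℝ)^k - k * k * (5 * ε * (n:ℝ)^k) := by rw [hcdef]; ring
    rw [h4]
    linarith
  have hS'ne : S'.Nonempty := by
    rw [← Finset.card_pos]
    have : 0 < c * (n:ℝ)^k := by positivity
    exact_mod_cast this.trans_le hS'c
  have hpartmem : ∀ x, P.part x ∈ P.parts := fun x => P.part_mem.2 (mem_univ x)
  have hex : ∃ f ∈ S', c * ∏ a, (#(P.part (f a)) : ℝ) ≤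
      #(S.filter fun g => ∀ a, g a ∈ P.part (f a)) := by
    by_contra hcon
    push Not at hcon
    let T : (α → Fin n) → (α → Finset (Fin n)) := fun f a => P.part (f a)
    have hfib := Finset.card_eq_sum_card_fiberwise (f := T) (s := S')
      (t := Fintype.piFinset fun _ => P.parts) (fun f _ => by
        simp only [mem_coe, Fintype.mem_piFinset]; exact fun a => hpartmem _)
    have hle : ∀ C ∈ Fintype.piFinset fun _ : α => P.parts,
        (#(S'.filter fun f => T f = C) : ℝ) ≤ c * ∏ a, (#(C a) : ℝ) := by
      intro C _
      rcases (S'.filter fun f => T f = C).eq_empty_or_nonempty with he | ⟨f, hf⟩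
      · rw [he]; simp
        exact mul_nonneg hc.le (Finset.prod_nonneg fun _ _ => Nat.cast_nonneg _)
      · rw [Finset.mem_filter] at hf
        obtain ⟨hf, rfl⟩ := hf
        refine le_trans ?_ (hcon f hf).le
        norm_cast
        refine Finset.card_le_card fun g hg => ?_
        simp only [mem_filter] at hg ⊢
        refine ⟨(Finset.mem_filter.1 hg.1).1, fun a => ?_⟩
        have : P.part (g a) = P.part (f a) := congrFun hg.2 a
        rw [← this]
        exact P.mem_part (mem_univ _)
    obtain ⟨f0, hf0⟩ := hS'ne
    have hlt : ∑ C ∈ Fintype.piFinset fun _ : α => P.parts, (#(S'.filter fun f => T f = C) : ℝ) <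
        ∑ C ∈ Fintype.piFinset fun _ : α => P.parts, c * ∏ a, (#(C a) : ℝ) := by
      refine Finset.sum_lt_sum hle ⟨T f0, by
        simp only [Fintype.mem_piFinset]; exact fun a => hpartmem _, ?_⟩
      refine lt_of_le_of_lt ?_ (hcon f0 hf0)
      norm_cast
      refine Finset.card_le_card fun g hg => ?_
      simp only [mem_filter] at hg ⊢
      refine ⟨(Finset.mem_filter.1 hg.1).1, fun a => ?_⟩
      have : P.part (g a) = P.part (f0 a) := congrFun hg.2 a
      rw [← this]
      exact P.mem_part (mem_univ _)
    rw [← Finset.mul_sum, ← Finset.prod_univ_sum (fun _ : α => P.parts)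
      (fun _ C => (#C : ℝ))] at hlt
    have hsum : ∑ C ∈ P.parts, (#C : ℝ) = n := by
      have := P.sum_card_parts
      rw [card_univ, Fintype.card_fin] at this
      exact_mod_cast this
    rw [hsum] at hlt
    simp only [prod_const, card_univ] at hlt
    have : (#S' : ℝ) = ∑ C ∈ Fintype.piFinset fun _ : α => P.parts,
      (#(S'.filter fun f => T f = C) : ℝ) := by exact_mod_cast hfib
    linarith
  obtain ⟨f, hfS', hf⟩ := hex
  rw [hS', Finset.mem_filter] at hfS'
  obtain ⟨hfS, hfB⟩ := hfS'
  have hne : ∀ a b, a ≠ b → P.part (f a) ≠ P.part (f b) := by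
    intro a b hab heq
    apply hfB a b hab
    rw [hB]
    refine Finset.mem_union_left _ (Finset.mem_biUnion.2 ⟨P.part (f a), hpartmem _, ?_⟩)
    rw [Finset.mem_offDiag]
    exact ⟨P.mem_part (mem_univ _), heq ▸ P.mem_part (mem_univ _), fun h => hab (hS f hfS h)⟩
  refine ⟨fun a => P.part (f a), ?_, ?_, ?_, hf⟩
  · intro a b hab
    exact P.disjoint (hpartmem _) (hpartmem _) (hne a b hab)
  · intro a b hab
    by_contra hnu
    apply hfB a b hab
    rw [hB]
    refine Finset.mem_union_right _ (Finset.mem_biUnion.2 ⟨(P.part (f a), P.part (f b)), ?_, ?_⟩)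
    · rw [Finpartition.mk_mem_nonUniforms]
      exact ⟨hpartmem _, hpartmem _, hne a b hab, hnu⟩
    · exact Finset.mem_product.2 ⟨P.mem_part (mem_univ _), P.mem_part (mem_univ _)⟩
  · intro a
    have h1 := hPe.average_le_card_part (hpartmem (f a))
    rw [card_univ, Fintype.card_fin] at h1
    have hpp : 0 < #P.parts := Finset.card_pos.2 ⟨_, hpartmem (f a)⟩
    have h2 : n < #P.parts * (n / #P.parts + 1) := by
      have := Nat.lt_mul_div_succ n hpp
      simpa using this
    have h3 : 1 ≤ n / #P.parts := (Nat.one_le_div_iff hpp).2 (hPM.trans hn)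
    calc n ≤ #P.parts * (n / #P.parts + 1) := h2.le
      _ ≤ M * (2 * #(P.part (f a))) := Nat.mul_le_mul hPM (by omega)
      _ = _ := by ring


/-- number of members of `K` agreeing with `φ` on `A` -/
noncomputable def cntExt {α β : Type} (K : Finset (α → β)) (A : Finset α) (φ : α → β) : ℕ :=
  open Classical in #(K.filter fun g => ∀ a ∈ A, g a = φ a)

lemma cntExt_le {α β : Type} [Fintype α] [DecidableEq α] (V : α → Finset β) (K : Finset (α → β))
    (hK : K ⊆ Fintype.piFinset V) (A : Finset α) (φ : α → β) :
    (cntExt K A φ : ℝ) ≤ ∏ b ∈ Aᶜ, (#(V b) : ℝ) := by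
  classical
  have h : #(K.filter fun g => ∀ a ∈ A, g a = φ a) ≤
      #(Fintype.piFinset fun a => if a ∈ A then {φ a} else V a) := by
    refine Finset.card_le_card fun g hg => ?_
    rw [Finset.mem_filter] at hg
    rw [Fintype.mem_piFinset]
    intro a
    split_ifs with ha
    · simpa using hg.2 a ha
    · exact Fintype.mem_piFinset.1 (hK hg.1) a
  have h2 : #(Fintype.piFinset fun a => if a ∈ A then {φ a} else V a) = ∏ b ∈ Aᶜ, #(V b) := by
    rw [Fintype.card_piFinset, ← Finset.prod_mul_prod_compl A]
    rw [Finset.prod_eq_one (s := A), one_mul]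
    · refine Finset.prod_congr rfl fun b hb => ?_
      rw [if_neg (Finset.mem_compl.1 hb)]
    · intro a ha; simp [ha]
  rw [h2] at h
  unfold cntExt
  have h3 : #(K.filter fun g => ∀ a ∈ A, g a = φ a) ≤ ∏ b ∈ Aᶜ, #(V b) := h
  calc _ ≤ ((∏ b ∈ Aᶜ, #(V b) : ℕ) : ℝ) := by
        refine Nat.cast_le.2 ?_
        convert h3
    _ = _ := by push_cast; rfl

lemma cntExt_split {α β : Type} [Fintype α] [DecidableEq α] (V : α → Finset β) (K : Finset (α → β))
    (hK : K ⊆ Fintype.piFinset V) (A : Finset α) (φ : α → β) (b : α) (hb : b ∉ A) :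
    cntExt K A φ = ∑ v ∈ V b, cntExt K (insert b A) (Function.update φ b v) := by
  classical
  unfold cntExt
  rw [Finset.card_eq_sum_card_fiberwise (f := fun g : α → β => g b) (t := V b)]
  · refine Finset.sum_congr rfl fun v _ => ?_
    congr 1
    ext g
    simp only [mem_filter, Finset.forall_mem_insert, Function.update_self]
    constructor
    · rintro ⟨⟨h1, h2⟩, h3⟩
      refine ⟨h1, h3, fun a ha => ?_⟩
      rw [Function.update_of_ne (ne_of_mem_of_not_mem ha hb)]
      exact h2 a ha
    · rintro ⟨h1, h3, h2⟩
      refine ⟨⟨h1, fun a ha => ?_⟩, h3⟩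
      have := h2 a ha
      rwa [Function.update_of_ne (ne_of_mem_of_not_mem ha hb)] at this
  · intro g hg
    simp only [Finset.mem_coe, Finset.mem_filter] at hg
    exact Fintype.mem_piFinset.1 (hK hg.1) b

/-- Partial blow-up structure on the pattern vertices `A`. -/
def PartialBlowup {α β : Type} [Fintype α] [DecidableEq α] (H : SimpleGraph α) (G : SimpleGraph β)
    (V : α → Finset β) (K : Finset (α → β)) (s : ℕ) (A : Finset α) (τ : ℝ) : Prop :=
  ∃ (J : Finset ℕ) (φ : ℕ → α → β), #J ≤ s ∧
    (∀ a ∈ A, Set.InjOn (fun j => φ j a) J) ∧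
    (∀ a ∈ A, ∀ b ∈ A, H.Adj a b → ∀ i ∈ J, ∀ j ∈ J, G.Adj (φ i a) (φ j b)) ∧
    τ * ∏ b ∈ Aᶜ, (#(V b) : ℝ) ≤ ∑ j ∈ J, (cntExt K A (φ j) : ℝ)

lemma partial_step {α β : Type} [Fintype α] [DecidableEq α] [Nonempty β] (H : SimpleGraph α)
    (G : SimpleGraph β)
    (V : α → Finset β) (hV : ∀ a, (V a).Nonempty) (K : Finset (α → β))
    (hK : K ⊆ Fintype.piFinset V)
    (hKH : ∀ g ∈ K, ∀ a b, H.Adj a b → G.Adj (g a) (g b)) (s : ℕ) (A : Finset α) (τ δ : ℝ)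
    (hδ : ∀ a, (2:ℝ) ^ s * s ^ 2 ≤ δ * #(V a)) (b : α) (hb : b ∉ A)
    (h : PartialBlowup H G V K s A τ) : PartialBlowup H G V K s (insert b A) (τ - δ) := by
  classical
  obtain ⟨J, φ, hJ, hinj, hadj, hsum⟩ := h
  set D : ℝ := ∏ b ∈ (insert b A)ᶜ, (#(V b) : ℝ) with hD
  have hVp : ∀ a, (0:ℝ) < #(V a) := fun a => by exact_mod_cast (hV a).card_pos
  have hDp : 0 < D := Finset.prod_pos fun a _ => hVp a
  have hDA : ∏ b ∈ Aᶜ, (#(V b) : ℝ) = #(V b) * D := by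
    rw [hD, Finset.compl_insert, Finset.mul_prod_erase _ (fun b => (#(V b) : ℝ))]
    simpa using hb
  set f : ℕ → β → ℝ := fun j v => (cntExt K (insert b A) (Function.update (φ j) b v) : ℝ) / D with hf
  obtain ⟨J', hJ', u, huV, huinj, hpos, hle⟩ := lossy_step s J hJ (V b) (hV b) f
    (fun j v => div_nonneg (Nat.cast_nonneg _) hDp.le)
    (fun j v => by
      rw [hf]; dsimp only
      rw [div_le_one hDp]
      exact cntExt_le V K hK _ _) τ δ (by
      have e : ∑ j ∈ J, ∑ v ∈ V b, f j v = (∑ j ∈ J, (cntExt K A (φ j) : ℝ)) / D := by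
        rw [Finset.sum_div]
        refine Finset.sum_congr rfl fun j _ => ?_
        rw [cntExt_split V K hK A (φ j) b hb, ← Finset.sum_div]
        push_cast; rfl
      rw [e, le_div_iff₀ hDp, mul_assoc, ← hDA]
      exact hsum) (hδ b)
  have hmem : ∀ i ∈ J', ∀ j ∈ J', ∃ g ∈ K, (∀ a ∈ A, g a = φ i a) ∧ g b = u j := by
    intro i hi j hj
    have := hpos i hi j hj
    rw [hf] at this
    dsimp only at this
    have h2 : (0:ℝ) < (cntExt K (insert b A) (Function.update (φ i) b (u j)) : ℝ) := by
      by_contra hc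
      have : (cntExt K (insert b A) (Function.update (φ i) b (u j)) : ℝ) / D ≤ 0 :=
        div_nonpos_of_nonpos_of_nonneg (not_lt.1 hc) hDp.le
      linarith
    have h3 : 0 < cntExt K (insert b A) (Function.update (φ i) b (u j)) := by exact_mod_cast h2
    unfold cntExt at h3
    obtain ⟨g, hg⟩ := Finset.card_pos.1 h3
    simp only [Finset.mem_filter, Finset.forall_mem_insert] at hg
    refine ⟨g, hg.1, fun a ha => ?_, by simpa using hg.2.1⟩
    have := hg.2.2 a ha
    rwa [Function.update_of_ne (ne_of_mem_of_not_mem ha hb)] at this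
  refine ⟨J', fun j => Function.update (φ j) b (u j), (Finset.card_le_card hJ').trans hJ, ?_, ?_, ?_⟩
  · intro a ha
    by_cases hab : a = b
    · subst hab; simpa using huinj
    · have haA : a ∈ A := (Finset.mem_insert.1 ha).resolve_left hab
      simp only [Function.update_of_ne hab]
      exact (hinj a haA).mono (by exact_mod_cast hJ')
  · intro a ha c hc hac i hi j hj
    dsimp only
    by_cases hab : a = b
    · by_cases hcb : c = b
      · subst hab; subst hcb; exact absurd hac (H.loopless.irrefl _)
      · have hcA : c ∈ A := (Finset.mem_insert.1 hc).resolve_left hcb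
        obtain ⟨g, hg, hgA, hgb⟩ := hmem j hj i hi
        have := hKH g hg a c hac
        rw [hab, Function.update_self, Function.update_of_ne hcb, ← hgb, ← hgA c hcA, ← hab]
        exact this
    · have haA : a ∈ A := (Finset.mem_insert.1 ha).resolve_left hab
      by_cases hcb : c = b
      · obtain ⟨g, hg, hgA, hgb⟩ := hmem i hi j hj
        have := hKH g hg a c hac
        rw [hcb, Function.update_self, Function.update_of_ne hab, ← hgb, ← hgA a haA, ← hcb]
        exact this
      · have hcA : c ∈ A := (Finset.mem_insert.1 hc).resolve_left hcb
        rw [Function.update_of_ne hab, Function.update_of_ne hcb]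
        exact hadj a haA c hcA hac i (hJ' hi) j (hJ' hj)
  · rw [hf] at hle
    dsimp only at hle
    rw [← Finset.sum_div, le_div_iff₀ hDp] at hle
    exact hle

lemma partial_chain {α β : Type} [Fintype α] [DecidableEq α] [Nonempty β] (H : SimpleGraph α)
    (G : SimpleGraph β)
    (V : α → Finset β) (hV : ∀ a, (V a).Nonempty) (K : Finset (α → β))
    (hK : K ⊆ Fintype.piFinset V)
    (hKH : ∀ g ∈ K, ∀ a b, H.Adj a b → G.Adj (g a) (g b)) (s : ℕ) (A : Finset α) (τ δ : ℝ)
    (hδ : ∀ a, (2:ℝ) ^ s * s ^ 2 ≤ δ * #(V a))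
    (h : PartialBlowup H G V K s A τ) (B : Finset α) (hAB : Disjoint A B) :
    PartialBlowup H G V K s (B ∪ A) (τ - #B * δ) := by
  classical
  induction B using Finset.induction_on with
  | empty => simpa using h
  | insert b B hb ih =>
    rw [Finset.disjoint_insert_right] at hAB
    have := partial_step H G V hV K hK hKH s (B ∪ A) _ δ hδ b (by simp [hb, hAB.1]) (ih hAB.2)
    rw [Finset.insert_union, Finset.card_insert_of_notMem hb]
    convert this using 1
    push_cast; ring

lemma blowup_of_partial {α β : Type} [Fintype α] [DecidableEq α] (H : SimpleGraph α)
    (G : SimpleGraph β) (V : α → Finset β) (hdis : ∀ a b, a ≠ b → Disjoint (V a) (V b))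
    (K : Finset (α → β))
    (hK : K ⊆ Fintype.piFinset V) (s t : ℕ) (τ : ℝ) (ht : (t : ℝ) ≤ τ)
    (h : PartialBlowup H G V K s univ τ) : ContainsCopy (blowupGraph H t) G := by
  classical
  obtain ⟨J, φ, hJ, hinj, hadj, hsum⟩ := h
  simp only [compl_univ, prod_empty, mul_one] at hsum
  set J' := J.filter (fun j => φ j ∈ K) with hJ'
  have h1 : ∑ j ∈ J, (cntExt K univ (φ j) : ℝ) = #J' := by
    rw [hJ', Finset.card_filter]
    push_cast
    refine Finset.sum_congr rfl fun j _ => ?_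
    unfold cntExt
    have : (K.filter fun g => ∀ a ∈ (univ : Finset α), g a = φ j a) = K.filter (fun g => g = φ j) := by
      refine Finset.filter_congr fun g _ => ?_
      simp [funext_iff]
    have h2 : #(K.filter (fun g => g = φ j)) = if φ j ∈ K then 1 else 0 := by
      rw [Finset.filter_eq']
      split_ifs <;> simp
    rw [← this] at h2
    have h3 : ((#(K.filter fun g => ∀ a ∈ (univ : Finset α), g a = φ j a) : ℕ) : ℝ) = if φ j ∈ K then 1 else 0 := by
      rw [h2]; push_cast; rfl
    convert h3
  rw [h1] at hsum
  have htJ : t ≤ #J' := by exact_mod_cast ht.trans hsum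
  let ι : Fin t → ℕ := fun i => (J'.equivFin.symm (Fin.castLE htJ i) : J')
  have hιm : ∀ i, ι i ∈ J' := fun i => (J'.equivFin.symm (Fin.castLE htJ i)).2
  have hιJ : ∀ i, ι i ∈ J := fun i => (Finset.mem_filter.1 (hιm i)).1
  have hιi : Function.Injective ι := by
    intro i j hij
    exact Fin.castLE_injective htJ (J'.equivFin.symm.injective (Subtype.ext hij))
  refine ⟨fun p => φ (ι p.2) p.1, ?_, ?_⟩
  · rintro ⟨a, i⟩ ⟨b, j⟩ hp
    dsimp only at hp
    have hVm : ∀ i a, φ (ι i) a ∈ V a := fun i a =>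
      Fintype.mem_piFinset.1 (hK (Finset.mem_filter.1 (hιm i)).2) a
    have hab : a = b := by
      by_contra hab
      exact Finset.disjoint_left.1 (hdis a b hab) (hVm i a) (hp ▸ hVm j b)
    subst hab
    have := hinj a (mem_univ _) (hιJ i) (hιJ j) hp
    rw [hιi this]
  · rintro ⟨a, i⟩ ⟨b, j⟩ hab
    exact hadj a (mem_univ _) b (mem_univ _) hab _ (hιJ i) _ (hιJ j)

lemma first_partial {α β : Type} [Fintype α] [DecidableEq α] [Nonempty β] (H : SimpleGraph α)
    (G : SimpleGraph β) [DecidableRel G.Adj]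
    (V : α → Finset β) (hV : ∀ a, (V a).Nonempty) (K : Finset (α → β))
    (hK : K ⊆ Fintype.piFinset V)
    (hKH : ∀ g ∈ K, ∀ a b, H.Adj a b → G.Adj (g a) (g b)) (s : ℕ) (hs : 0 < s)
    (a b : α) (hab : H.Adj a b) (θ κ : ℝ) (hθ : 0 ≤ θ) (hκ : 0 < κ)
    (hsum : (κ + θ * (G.edgeDensity (V a) (V b) : ℝ)) * ∏ c, (#(V c) : ℝ) ≤ #K)
    (hlarge : (s:ℝ)^2 / #(V a) + s / #(V b) < κ ^ s) :
    PartialBlowup H G V K s (insert b (insert a ∅)) (θ * s) := by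
  classical
  have hne : b ≠ a := hab.ne'
  set A : Finset α := insert b (insert a ∅) with hA
  set D : ℝ := ∏ c ∈ Aᶜ, (#(V c) : ℝ) with hD
  have hVp : ∀ a, (0:ℝ) < #(V a) := fun a => by exact_mod_cast (hV a).card_pos
  have hDp : 0 < D := Finset.prod_pos fun a _ => hVp a
  have hbA : b ∉ (insert a ∅ : Finset α) := by simp [hne]
  have hall : ∏ c, (#(V c) : ℝ) = #(V a) * #(V b) * D := by
    rw [hD, ← Finset.prod_mul_prod_compl A, hA, Finset.prod_insert hbA]
    simp [mul_comm]
  let φ0 : α → β := fun _ => Classical.arbitrary β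
  let Φ : β → β → α → β := fun x y => Function.update (Function.update φ0 a x) b y
  have hΦa : ∀ x y, Φ x y a = x := fun x y => by simp [Φ, Function.update_of_ne hne.symm]
  have hΦb : ∀ x y, Φ x y b = y := fun x y => by simp [Φ]
  set w : β → β → ℝ := fun x y => (cntExt K A (Φ x y) : ℝ) / D with hw
  have hw0 : ∀ x y, 0 ≤ w x y := fun x y => div_nonneg (Nat.cast_nonneg _) hDp.le
  have hw1 : ∀ x y, w x y ≤ if G.Adj x y then 1 else 0 := by
    intro x y
    split_ifs with hR
    · rw [hw]; dsimp only
      rw [div_le_one hDp]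
      exact cntExt_le V K hK _ _
    · have : cntExt K A (Φ x y) = 0 := by
        unfold cntExt
        refine Finset.card_eq_zero.2 (Finset.eq_empty_of_forall_notMem ?_)
        intro g hg'
        simp only [Finset.mem_filter] at hg'
        obtain ⟨hg, hgA⟩ := hg'
        have h1 := hgA a (by simp [hA])
        have h2 := hgA b (by simp [hA])
        rw [hΦa] at h1
        rw [hΦb] at h2
        apply hR
        rw [← h1, ← h2]
        exact hKH g hg a b hab
      rw [hw]; dsimp only
      rw [this]; simp
  have hKsum : (#K : ℝ) = ∑ x ∈ V a, ∑ y ∈ V b, (cntExt K A (Φ x y) : ℝ) := by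
    have h0 : cntExt K ∅ φ0 = #K := by unfold cntExt; simp
    rw [← h0, cntExt_split V K hK ∅ φ0 a (by simp)]
    push_cast
    refine Finset.sum_congr rfl fun x _ => ?_
    rw [cntExt_split V K hK _ _ b hbA]
    push_cast
    rfl
  have hws : ∑ y ∈ V b, ∑ x ∈ V a, w x y = #K / D := by
    rw [Finset.sum_comm, hKsum, Finset.sum_div]
    refine Finset.sum_congr rfl fun x _ => ?_
    rw [Finset.sum_div]
  have hR : ∑ y ∈ V b, ∑ x ∈ V a, (if G.Adj x y then (1:ℝ) else 0)
      = (G.edgeDensity (V a) (V b) : ℝ) * #(V a) * #(V b) := by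
    rw [SimpleGraph.edgeDensity_def]
    push_cast
    have h1 : (#(G.interedges (V a) (V b)) : ℝ) =
        ∑ y ∈ V b, ∑ x ∈ V a, (if G.Adj x y then (1:ℝ) else 0) := by
      rw [SimpleGraph.interedges, Rel.interedges, Finset.card_filter, Finset.sum_product_right]
      push_cast
      rfl
    rw [← h1]
    have := (hVp a).ne'
    have := (hVp b).ne'
    field_simp
  obtain ⟨x, y, hx, hy, hxi, hyi, hxy, hle⟩ := first_step (V a) (V b) G.Adj w (hV a) (hV b) hw0 hw1
    θ κ hθ hκ (by
      simp only [Finset.sum_sub_distrib, ← Finset.mul_sum]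
      rw [hws, hR, le_sub_iff_add_le, le_div_iff₀ hDp]
      rw [hall] at hsum
      refine le_trans (le_of_eq ?_) hsum
      ring) s hs hlarge
  refine ⟨range s, fun j => if h : j < s then Φ (x ⟨j, h⟩) (y ⟨j, h⟩) else φ0, by simp, ?_, ?_, ?_⟩
  · intro c hc i hi j hj hij
    have hi' : i < s := by simpa using hi
    have hj' : j < s := by simpa using hj
    simp only [hi', hj', dif_pos] at hij
    simp only [hA, Finset.mem_insert, Finset.notMem_empty, or_false] at hc
    rcases hc with rfl | rfl
    · rw [hΦb, hΦb] at hij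
      simpa using hyi hij
    · rw [hΦa, hΦa] at hij
      simpa using hxi hij
  · intro c hc c' hc' hcc i hi j hj
    have hi' : i < s := by simpa using hi
    have hj' : j < s := by simpa using hj
    simp only [hi', hj', dif_pos]
    simp only [hA, Finset.mem_insert, Finset.notMem_empty, or_false] at hc hc'
    rcases hc with rfl | rfl <;> rcases hc' with rfl | rfl
    · exact absurd hcc (H.loopless.irrefl _)
    · rw [hΦa, hΦb]; exact (hxy _ _).symm
    · rw [hΦa, hΦb]; exact hxy _ _
    · exact absurd hcc (H.loopless.irrefl _)
  · rw [Finset.sum_range]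
    simp only [Fin.is_lt, dif_pos, Fin.eta]
    rw [hw] at hle
    dsimp only at hle
    rw [← Finset.sum_div, le_div_iff₀ hDp] at hle
    exact hle

lemma core_blowup {α β : Type} [Fintype α] [DecidableEq α] [DecidableEq β] [Nonempty β]
    (H : SimpleGraph α) (F : Finset (Sym2 α)) (hF : ∀ a b, s(a, b) ∈ F ↔ H.Adj a b)
    (hF0 : F.Nonempty)
    (G : SimpleGraph β) [DecidableRel G.Adj] [DecidablePred (· ∈ G.edgeSet)]
    (V : α → Finset β) (hV : ∀ a, (V a).Nonempty)
    (hdis : ∀ a b, a ≠ b → Disjoint (V a) (V b)) (ε : ℝ) (hε : 0 < ε)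
    (huni : ∀ a b, a ≠ b → G.IsUniform ε (V a) (V b)) (η q κ δ : ℝ) (hq : 0 < q)
    (hqη : q ≤ η - #F * ε)
    (hcount : η * ∏ a, (#(V a) : ℝ) ≤
      #((Fintype.piFinset V).filter fun f => ∀ e ∈ F, Sym2.map f e ∈ G.edgeSet))
    (hκ : 0 < κ) (hκq : κ + #F * ε ≤ q / 6) (s t : ℕ) (hs : 0 < s)
    (hlarge : ∀ a b, (s:ℝ)^2 / #(V a) + s / #(V b) < κ ^ s) (hδ0 : 0 ≤ δ)
    (hδ : ∀ a, (2:ℝ) ^ s * s ^ 2 ≤ δ * #(V a))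
    (ht : (t : ℝ) ≤ 5 / 6 * q ^ ((1:ℝ) - 1 / (#F : ℝ)) * s - Fintype.card α * δ) :
    ContainsCopy (blowupGraph H t) G := by
  classical
  set K := (Fintype.piFinset V).filter fun f => ∀ e ∈ F, Sym2.map f e ∈ G.edgeSet with hKdef
  set W : ℝ := ∏ a, (#(V a) : ℝ) with hW
  have hWp : 0 < W := Finset.prod_pos fun a _ => by exact_mod_cast (hV a).card_pos
  set P : ℝ := ∏ e ∈ F, pairDensity G V e with hP
  have hc := counting G ε hε V hV F (fun a b hab => by
    have h := (hF a b).1 hab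
    exact ⟨h.ne, huni a b h.ne⟩)
  rw [← hKdef, ← hP, ← hW] at hc
  have hc1 := (abs_le.1 hc).1
  have hc2 := (abs_le.1 hc).2
  have hPq : q ≤ P := by
    have : (η - #F * ε) * W ≤ P * W := by nlinarith
    exact hqη.trans (le_of_mul_le_mul_right this hWp)
  have hPp : 0 < P := hq.trans_le hPq
  have hm : (0:ℝ) < #F := by exact_mod_cast hF0.card_pos
  have hm1 : (1:ℝ) ≤ #F := by exact_mod_cast hF0.card_pos
  have hdnn : ∀ e ∈ F, 0 ≤ pairDensity G V e := by
    intro e _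
    induction e using Sym2.ind with
    | _ a b =>
      change (0:ℝ) ≤ (G.edgeDensity (V a) (V b) : ℝ)
      exact_mod_cast G.edgeDensity_nonneg _ _
  obtain ⟨e, heF, hde⟩ : ∃ e ∈ F, pairDensity G V e ≤ P ^ (1 / (#F : ℝ)) := by
    by_contra! hcon
    have h1 : ∏ _e ∈ F, P ^ (1 / (#F : ℝ)) < ∏ e ∈ F, pairDensity G V e :=
      Finset.prod_lt_prod_of_nonempty (fun e _ => Real.rpow_pos_of_pos hPp _) hcon hF0
    rw [Finset.prod_const, ← Real.rpow_natCast, ← Real.rpow_mul hPp.le,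
      one_div_mul_cancel hm.ne', Real.rpow_one] at h1
    exact lt_irrefl _ h1
  induction e using Sym2.ind with
  | _ a b =>
    have hab : H.Adj a b := (hF a b).1 heF
    have hde' : (G.edgeDensity (V a) (V b) : ℝ) ≤ P ^ (1 / (#F : ℝ)) := hde
    set θ : ℝ := 5 / 6 * q ^ ((1:ℝ) - 1 / (#F : ℝ)) with hθ
    have hex : (0:ℝ) ≤ 1 - 1 / (#F : ℝ) := by
      rw [sub_nonneg, div_le_one hm]; exact hm1
    have hqpow : q ^ ((1:ℝ) - 1 / (#F : ℝ)) ≤ P ^ ((1:ℝ) - 1 / (#F : ℝ)) :=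
      Real.rpow_le_rpow hq.le hPq hex
    have hqp : 0 < q ^ ((1:ℝ) - 1 / (#F : ℝ)) := Real.rpow_pos_of_pos hq _
    have hθ0 : 0 ≤ θ := by positivity
    have hmul : P ^ ((1:ℝ) - 1 / (#F : ℝ)) * P ^ (1 / (#F : ℝ)) = P := by
      rw [← Real.rpow_add hPp, sub_add_cancel, Real.rpow_one]
    have hθd : θ * (G.edgeDensity (V a) (V b) : ℝ) ≤ 5 / 6 * P := by
      have h2 : q ^ ((1:ℝ) - 1 / (#F : ℝ)) * (G.edgeDensity (V a) (V b) : ℝ) ≤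
          P ^ ((1:ℝ) - 1 / (#F : ℝ)) * P ^ (1 / (#F : ℝ)) :=
        mul_le_mul hqpow hde' (hdnn _ heF) (hqp.le.trans hqpow)
      rw [hmul] at h2
      rw [hθ]; linarith
    have hKpi : K ⊆ Fintype.piFinset V := Finset.filter_subset _ _
    have hKH : ∀ g ∈ K, ∀ a b, H.Adj a b → G.Adj (g a) (g b) := by
      intro g hg a b hab
      exact (Finset.mem_filter.1 hg).2 s(a, b) ((hF a b).2 hab)
    have h1 := first_partial H G V hV K hKpi hKH s hs a b hab θ κ hθ0 hκ (by
      rw [← hW]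
      have : (κ + θ * (G.edgeDensity (V a) (V b) : ℝ)) * W ≤ (P - #F * ε) * W :=
        mul_le_mul_of_nonneg_right (by linarith) hWp.le
      linarith) (hlarge a b)
    have h2 := partial_chain H G V hV K hKpi hKH s _ _ δ hδ h1 (insert b (insert a ∅))ᶜ
      disjoint_compl_right
    rw [Finset.union_comm, Finset.union_compl] at h2
    refine blowup_of_partial H G V hdis K hKpi s t _ (ht.trans ?_) h2
    have h3 : (#((insert b (insert a ∅) : Finset α)ᶜ) : ℝ) ≤ Fintype.card α := by
      exact_mod_cast Finset.card_le_univ _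
    have := mul_le_mul_of_nonneg_right h3 hδ0
    linarith


lemma exp_quarter_large (A y : ℝ) (hA : 0 ≤ A) (hy1 : 1 ≤ y) (hy : 768 * A + 1 ≤ y) :
    A * (y ^ 2 + y) < Real.exp (y / 4) := by
  have h := Real.pow_div_factorial_le_exp (y / 4) (by linarith) 3
  have h3 : ((Nat.factorial 3 : ℕ) : ℝ) = 6 := by norm_num [Nat.factorial]
  rw [h3] at h
  have h1 : A * (y ^ 2 + y) ≤ A * (2 * y ^ 2) := by
    apply mul_le_mul_of_nonneg_left _ hA
    nlinarith
  have h2 : A * (2 * y ^ 2) < (y / 4) ^ 3 / 6 := by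
    have : 0 < y ^ 2 * (y - 768 * A) := by
      apply mul_pos (by positivity); linarith
    nlinarith
  linarith

lemma final_numeric (η L y C c v : ℝ) (M k s : ℕ) (hη0 : 0 < η) (hL : L = Real.log (1 / η))
    (hL1 : 1 < L) (hM : 0 < M) (hs : s = ⌊y / (4 * L)⌋₊) (hc0 : 0 < c) (hc1 : c ≤ 1)
    (hy1 : 1 ≤ y) (hC : C = 2 * M * (k + 1))
    (hy2 : 768 * C + 1 ≤ y) (hy3 : 4 * L ≤ y) (hy4 : 400 * L / c ≤ y)
    (hv : Real.exp y ≤ 2 * M * v) (hv0 : 0 < v) :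
    0 < s ∧ (s:ℝ) ^ 2 / v + s / v < (η * Real.exp (-2)) ^ s ∧
      (2:ℝ) ^ s * s ^ 2 ≤ 1 / (k + 1) * v ∧
      c / (5 * L) * y ≤ 5 / 6 * (99 / 100 * c) * s - k * (1 / (k + 1)) := by
  have hL0 : 0 < L := by linarith
  have hMr : (1:ℝ) ≤ M := by exact_mod_cast hM
  have hk : (0:ℝ) ≤ k := Nat.cast_nonneg k
  have hC0 : 0 ≤ C := by rw [hC]; positivity
  have hexp := exp_quarter_large C y hC0 hy1 hy2
  have hspos : 0 < s := by
    rw [hs, Nat.floor_pos, le_div_iff₀ (by positivity)]; linarith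
  have hsle : (s:ℝ) ≤ y / (4 * L) := by
    rw [hs]; exact Nat.floor_le (by positivity)
  have hsge : y / (4 * L) - 1 ≤ s := by
    rw [hs]; exact (Nat.sub_one_lt_floor _).le
  have hsL : s * L ≤ y / 4 := by
    have := mul_le_mul_of_nonneg_right hsle hL0.le
    have e : y / (4 * L) * L = y / 4 := by field_simp
    linarith
  have hs0 : (0:ℝ) ≤ s := Nat.cast_nonneg s
  have hs4 : (s:ℝ) ≤ y / 4 := by nlinarith
  have hsy : (s:ℝ) ≤ y := by linarith
  have hsq : (s:ℝ) ^ 2 + s ≤ y ^ 2 + y := by nlinarith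
  have hMC : 2 * (M:ℝ) ≤ C := by rw [hC]; nlinarith
  have hsplit : Real.exp y = Real.exp (y / 4) * Real.exp (3 * y / 4) := by
    rw [← Real.exp_add]; congr 1; ring
  refine ⟨hspos, ?_, ?_, ?_⟩
  · have h1 : Real.exp (-(3 * y / 4)) ≤ (η * Real.exp (-2)) ^ s := by
      have hη : η = Real.exp (-L) := by
        rw [hL, one_div, Real.log_inv, neg_neg, Real.exp_log hη0]
      rw [hη, ← Real.exp_add, ← Real.exp_nat_mul]
      apply Real.exp_le_exp.2
      nlinarith
    refine lt_of_lt_of_le ?_ h1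
    rw [← add_div, div_lt_iff₀ hv0, Real.exp_neg, inv_mul_eq_div, lt_div_iff₀ (Real.exp_pos _)]
    have h2 : 2 * (M:ℝ) * (s ^ 2 + s) < Real.exp (y / 4) := by
      have : 2 * (M:ℝ) * (s ^ 2 + s) ≤ C * (y ^ 2 + y) :=
        mul_le_mul hMC hsq (by positivity) hC0
      linarith
    have h3 := mul_lt_mul_of_pos_right h2 (Real.exp_pos (3 * y / 4))
    rw [← hsplit] at h3
    have h4 : 2 * (M:ℝ) * ((s ^ 2 + s) * Real.exp (3 * y / 4)) < 2 * M * v := by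
      linarith
    exact lt_of_mul_lt_mul_left h4 (by positivity)
  · have h1 : (2:ℝ) ^ s ≤ Real.exp (y / 4) := by
      have h2 : (2:ℝ) ≤ Real.exp 1 := by
        have := Real.add_one_le_exp (1:ℝ); linarith
      calc (2:ℝ) ^ s ≤ Real.exp 1 ^ s := pow_le_pow_left₀ (by norm_num) h2 s
        _ = Real.exp s := by rw [← Real.exp_nat_mul, mul_one]
        _ ≤ _ := Real.exp_le_exp.2 hs4
    have h3 : C * (s:ℝ) ^ 2 ≤ Real.exp (3 * y / 4) := by
      have h5 : C * (s:ℝ) ^ 2 ≤ C * (y ^ 2 + y) :=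
        mul_le_mul_of_nonneg_left (by linarith) hC0
      have h6 : Real.exp (y / 4) ≤ Real.exp (3 * y / 4) := Real.exp_le_exp.2 (by linarith)
      linarith
    have h4 : (2:ℝ) ^ s * (C * (s:ℝ) ^ 2) ≤ Real.exp y := by
      rw [hsplit]
      exact mul_le_mul h1 h3 (by positivity) (Real.exp_pos _).le
    rw [one_div, inv_mul_eq_div, le_div_iff₀ (by positivity)]
    have h7 : 2 * (M:ℝ) * ((2:ℝ) ^ s * s ^ 2 * (k + 1)) ≤ 2 * M * v := by
      refine le_trans (le_of_eq ?_) (h4.trans hv)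
      rw [hC]; ring
    exact le_of_mul_le_mul_left h7 (by positivity)
  · have h1 : (k:ℝ) * (1 / (k + 1)) ≤ 1 := by
      rw [mul_one_div, div_le_one (by positivity)]; linarith
    have h2 : 400 ≤ c * (y / L) := by
      rw [div_le_iff₀ hc0] at hy4
      rw [mul_div_assoc', le_div_iff₀ hL0]; linarith
    have e1 : c / (5 * L) * y = 1 / 5 * (c * (y / L)) := by field_simp
    have e2 : y / (4 * L) = 1 / 4 * (y / L) := by field_simp
    rw [e2] at hsge
    have h3 : 5 / 6 * (99 / 100 * c) * (1 / 4 * (y / L) - 1) ≤ 5 / 6 * (99 / 100 * c) * s :=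
      mul_le_mul_of_nonneg_left hsge (by positivity)
    rw [e1]
    nlinarith

lemma nikiforov_aux (η : ℝ) (hη0 : 0 < η) (hη1 : η < Real.exp (-1))
    (α : Type) [Fintype α] (H : SimpleGraph α) (hH : ∃ x y, H.Adj x y) :
    ∃ N : ℕ, ∀ n : ℕ, N ≤ n → ∀ G : SimpleGraph (Fin n),
      η * (n : ℝ) ^ (Fintype.card α) ≤
        (Nat.card {f : α → Fin n // Function.Injective f ∧
          ∀ x y, H.Adj x y → G.Adj (f x) (f y)} : ℝ) →
      ContainsCopy
        (blowupGraph H ⌊(η ^ ((1 : ℝ) - 1 / (Nat.card H.edgeSet : ℝ)) /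
          (5 * Real.log (1 / η))) * Real.log n⌋₊) G := by
  classical
  set F : Finset (Sym2 α) := H.edgeFinset with hFdef
  have hF : ∀ a b, s(a, b) ∈ F ↔ H.Adj a b := fun a b => by simp [hFdef]
  have hFc : Nat.card H.edgeSet = #F := by
    rw [Nat.card_eq_fintype_card, hFdef, SimpleGraph.edgeFinset_card]
  rw [hFc]
  obtain ⟨x0, y0, hxy0⟩ := hH
  have hF0 : F.Nonempty := ⟨s(x0, y0), (hF _ _).2 hxy0⟩
  have hm1 : (1:ℝ) ≤ #F := by exact_mod_cast hF0.card_pos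
  set k := Fintype.card α with hk
  set m : ℝ := ((#F : ℕ) : ℝ) with hm
  set ε : ℝ := 1 / 100 * η / (5 * (k:ℝ) ^ 2 + m) with hε
  have hden : 0 < 5 * (k:ℝ) ^ 2 + m := by positivity
  have hεp : 0 < ε := by positivity
  have hεs : 5 * (k:ℝ) ^ 2 * ε + m * ε = 1 / 100 * η := by
    rw [hε]; field_simp
  have hkε : 0 ≤ 5 * (k:ℝ) ^ 2 * ε := by positivity
  have hmε : 0 ≤ m * ε := by positivity
  set L := Real.log (1 / η) with hL
  have hL1 : 1 < L := by
    rw [hL, one_div, Real.log_inv]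
    have := Real.log_lt_log hη0 hη1
    rw [Real.log_exp] at this
    linarith
  have hη1' : η < 1 := hη1.trans (by rw [Real.exp_lt_one_iff]; norm_num)
  have hex0 : (0:ℝ) ≤ 1 - 1 / m := by
    rw [sub_nonneg, div_le_one (by linarith)]; exact hm1
  have hex1 : 1 - 1 / m ≤ (1:ℝ) := by
    have : 0 ≤ 1 / m := by positivity
    linarith
  set c : ℝ := η ^ ((1:ℝ) - 1 / m) with hc
  have hc0 : 0 < c := Real.rpow_pos_of_pos hη0 _
  have hc1 : c ≤ 1 := Real.rpow_le_one hη0.le hη1'.le hex0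
  obtain ⟨M, hM, hreg⟩ := regular_selection α ε hεp
  set C : ℝ := 2 * M * (k + 1) with hC
  set Y : ℝ := max (max 1 (768 * C + 1)) (max (4 * L) (400 * L / c)) with hY
  refine ⟨max M ⌈Real.exp Y⌉₊, fun n hn G hcard => ?_⟩
  have hnM : M ≤ n := (le_max_left _ _).trans hn
  have hnY : Real.exp Y ≤ n := Nat.ceil_le.1 ((le_max_right _ _).trans hn)
  have hn0 : (0:ℝ) < n := (Real.exp_pos _).trans_le hnY
  set y := Real.log n with hy
  have hYy : Y ≤ y := by rw [hy, Real.le_log_iff_exp_le hn0]; exact hnY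
  have hye : Real.exp y = n := Real.exp_log hn0
  have hnN : 0 < n := by exact_mod_cast hn0
  have : Nonempty (Fin n) := ⟨⟨0, hnN⟩⟩
  set S : Finset (α → Fin n) := univ.filter fun f => Function.Injective f ∧
    ∀ x y, H.Adj x y → G.Adj (f x) (f y) with hS
  have hScard : Nat.card {f : α → Fin n // Function.Injective f ∧
      ∀ x y, H.Adj x y → G.Adj (f x) (f y)} = #S := by
    rw [Nat.card_eq_fintype_card, Fintype.card_subtype]
  rw [hScard] at hcard
  obtain ⟨V, hdis, huni, hVn, hcnt⟩ := hreg n hnM G S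
    (fun f hf => (Finset.mem_filter.1 hf).2.1) η (by linarith) hcard
  have hVpos : ∀ a, 0 < #(V a) := by
    intro a
    rcases Nat.eq_zero_or_pos #(V a) with h | h
    · have := hVn a
      rw [h] at this
      omega
    · exact h
  have hVr : ∀ a, (0:ℝ) < #(V a) := fun a => by exact_mod_cast hVpos a
  set v : ℝ := n / (2 * M) with hv
  have hMr : (0:ℝ) < M := by exact_mod_cast hM
  have hv0 : 0 < v := by positivity
  have hvV : ∀ a, v ≤ #(V a) := by
    intro a
    rw [hv, div_le_iff₀ (by positivity)]
    have : (n:ℝ) ≤ 2 * M * #(V a) := by exact_mod_cast hVn a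
    linarith
  obtain ⟨hs0, hs1, hs2, hs3⟩ := final_numeric η L y C c v M k ⌊y / (4 * L)⌋₊ hη0 hL hL1 hM rfl
    hc0 hc1 ((le_max_left _ _).trans ((le_max_left _ _).trans hYy)) hC
    ((le_max_right _ _).trans ((le_max_left _ _).trans hYy))
    ((le_max_left _ _).trans ((le_max_right _ _).trans hYy))
    ((le_max_right _ _).trans ((le_max_right _ _).trans hYy))
    (by rw [hye, hv]; field_simp; exact le_refl _) hv0
  set s := ⌊y / (4 * L)⌋₊ with hs
  have hexp2 : Real.exp (-2) ≤ 14 / 100 := by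
    have h1 : (2.7:ℝ) < Real.exp 1 := by
      have := Real.exp_one_gt_d9; linarith
    have h2 : Real.exp 2 = Real.exp 1 * Real.exp 1 := by
      rw [← Real.exp_add]; norm_num
    rw [Real.exp_neg, inv_le_comm₀ (Real.exp_pos _) (by norm_num), h2]
    nlinarith
  refine core_blowup H F hF hF0 G V (fun a => Finset.card_pos.1 (hVpos a)) hdis ε hεp huni
    (η - 5 * (k:ℝ) ^ 2 * ε) (99 / 100 * η) (η * Real.exp (-2)) (1 / (k + 1)) (by positivity)
    (by linarith) (hcnt.trans ?_) (by positivity) ?_ s _ hs0 ?_ (by positivity) ?_ ?_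
  · refine Nat.cast_le.2 (Finset.card_le_card fun f hf => ?_)
    rw [Finset.mem_filter] at hf
    rw [Finset.mem_filter, Fintype.mem_piFinset]
    refine ⟨hf.2, fun e he => ?_⟩
    induction e using Sym2.ind with
    | _ a b =>
      exact (Finset.mem_filter.1 hf.1).2.2 a b ((hF a b).1 he)
  · have := mul_le_mul_of_nonneg_left hexp2 hη0.le
    linarith
  · intro a b
    refine lt_of_le_of_lt ?_ hs1
    exact add_le_add (div_le_div_of_nonneg_left (by positivity) hv0 (hvV a))
      (div_le_div_of_nonneg_left (by positivity) hv0 (hvV b))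
  · intro a
    exact hs2.trans (mul_le_mul_of_nonneg_left (hvV a) (by positivity))
  · have hy0 : 0 ≤ y := by
      have : (1:ℝ) ≤ y := (le_max_left _ _).trans ((le_max_left _ _).trans hYy)
      linarith
    have hL0 : 0 < L := by linarith
    refine (Nat.floor_le (by positivity)).trans (hs3.trans ?_)
    have hq : 99 / 100 * c ≤ (99 / 100 * η) ^ ((1:ℝ) - 1 / m) := by
      rw [Real.mul_rpow (by norm_num) hη0.le]
      refine mul_le_mul_of_nonneg_right ?_ hc0.le
      calc (99 / 100 : ℝ) = (99 / 100 : ℝ) ^ (1:ℝ) := (Real.rpow_one _).symm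
        _ ≤ _ := Real.rpow_le_rpow_of_exponent_ge (by norm_num) (by norm_num) hex1
    have : 5 / 6 * (99 / 100 * c) * (s:ℝ) ≤ 5 / 6 * (99 / 100 * η) ^ ((1:ℝ) - 1 / m) * s := by
      gcongr
    linarith

end Aux

/-- improved version of Nikiforov's theorem. If `0 < η < e⁻¹` and `H` is a
graph on `k` vertices with at least one edge, then with `λ = η^(1-1/|E(H)|) / (5 log(1/η))`,
for all sufficiently large `n`, every graph `G` on `n` vertices with at least `η n^k` labeled
copies of `H` contains the blowup `H[t]` with `t = ⌊λ log n⌋`. -/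
theorem nikiforov_improved (η : ℝ) (hη0 : 0 < η) (hη1 : η < Real.exp (-1))
    (α : Type) [Fintype α] (H : SimpleGraph α) (hH : ∃ x y, H.Adj x y) :
    ∃ N : ℕ, ∀ n : ℕ, N ≤ n → ∀ G : SimpleGraph (Fin n),
      η * (n : ℝ) ^ (Fintype.card α) ≤
        (Nat.card {f : α → Fin n // Function.Injective f ∧
          ∀ x y, H.Adj x y → G.Adj (f x) (f y)} : ℝ) →
      ContainsCopy
        (blowupGraph H ⌊(η ^ ((1 : ℝ) - 1 / (Nat.card H.edgeSet : ℝ)) /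
          (5 * Real.log (1 / η))) * Real.log n⌋₊) G := by
  exact nikiforov_aux η hη0 hη1 α H hH
end

section
/- Let H be a graph with vertex set [k] = {1,…,k} such that {1,2} is an edge of H. For every edge ij of H let p_{ij} ∈ (0,1] be given, with p_{12} ≤ 1/2, and let 0 < α < ∏_{ij ∈ E(H)} p_{ij}. Then there exists n_0 such that the following holds for all n ≥ n_0. Suppose Γ is a k-partite graph with parts W_1, …, W_k, each of size at least n, such that whenever ij is an edge of H, the pair (W_i, W_j) is (α²/(8k²))-regular with edge density d(W_i, W_j) ≥ p_{ij}. Then Γ contains a canonical copy of H[t] (i.e., a copy of H[t] in which the blowup class of vertex i lies inside W_i for every i), where t = ⌊( ∏_{ij ∈ E(H), ij ≠ {1,2}} p_{ij} − α ) · log n / log(1/p_{12}) ⌋. -/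
namespace BlowupAux

open Finset

open Classical in
/-- Candidates for the image of `l` after embedding the vertices below `j` by `x`. -/
noncomputable def cand {K : ℕ} (H : SimpleGraph (Fin K)) {V : Type} (Γ : SimpleGraph V)
    (W : Fin K → Finset V) (j : ℕ) (x : Fin K → V) (l : Fin K) : Finset V :=
  (W l).filter (fun v => ∀ i : Fin K, i.val < j → H.Adj i l → Γ.Adj (x i) v)

lemma mem_cand {K : ℕ} {H : SimpleGraph (Fin K)} {V : Type} {Γ : SimpleGraph V}
    {W : Fin K → Finset V} {j : ℕ} {x : Fin K → V} {l : Fin K} {v : V} :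
    v ∈ cand H Γ W j x l ↔
      v ∈ W l ∧ ∀ i : Fin K, i.val < j → H.Adj i l → Γ.Adj (x i) v := by
  classical
  unfold cand
  exact Finset.mem_filter

open Classical in
/-- The expected proportion of candidates. -/
noncomputable def pr {K : ℕ} (H : SimpleGraph (Fin K)) (P : Fin K → Fin K → ℝ) (ε : ℝ)
    (j : ℕ) (l : Fin K) : ℝ :=
  ∏ i ∈ univ.filter (fun i : Fin K => i.val < j ∧ H.Adj i l), (P i l - ε)

/-- Typical partial tuples. -/
def Good {K : ℕ} (H : SimpleGraph (Fin K)) {V : Type} (Γ : SimpleGraph V)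
    (W : Fin K → Finset V) (P : Fin K → Fin K → ℝ) (ε : ℝ) (j : ℕ) (x : Fin K → V) : Prop :=
  ∀ l : Fin K, j ≤ l.val → pr H P ε j l * ((W l).card : ℝ) ≤ ((cand H Γ W j x l).card : ℝ)

/-- A partial blowup of size `m` on the vertices below `j`, with typical diagonal. -/
def State {K : ℕ} (H : SimpleGraph (Fin K)) {V : Type} (Γ : SimpleGraph V)
    (W : Fin K → Finset V) (P : Fin K → Fin K → ℝ) (ε : ℝ) (j m : ℕ) : Prop :=
  ∃ X : Fin m → Fin K → V,
    (∀ i : Fin K, i.val < j → Function.Injective (fun a => X a i)) ∧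
    (∀ i : Fin K, i.val < j → ∀ a, X a i ∈ W i) ∧
    (∀ a, Good H Γ W P ε j (X a)) ∧
    (∀ i i' : Fin K, i.val < j → i'.val < j → H.Adj i i' → ∀ a b, Γ.Adj (X a i) (X b i'))

open Classical in
lemma bad_card {V : Type} (Γ : SimpleGraph V) [DecidableRel Γ.Adj] (A B C : Finset V) (ε q : ℝ)
    (hε : 0 < ε)
    (hu : Γ.IsUniform ε A B) (hd : q ≤ (Γ.edgeDensity A B : ℝ)) (hC : C ⊆ B)
    (hCc : (B.card : ℝ) * ε ≤ C.card) :
    ((A.filter (fun v => ((C.filter (fun u => Γ.Adj v u)).card : ℝ) < (q - ε) * C.card)).card : ℝ)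
      ≤ ε * A.card := by
  set D := A.filter (fun v => ((C.filter (fun u => Γ.Adj v u)).card : ℝ) < (q - ε) * C.card)
    with hD
  by_contra hcon
  push Not at hcon
  have h1 := hu (show D ⊆ A from filter_subset _ _) hC (by linarith) hCc
  have hDpos : (0:ℝ) < D.card := lt_of_le_of_lt (by positivity) hcon
  have hDne : D.Nonempty := by
    rw [← Finset.card_pos]; exact_mod_cast hDpos
  have hsum : ((Γ.interedges D C).card : ℝ) < D.card * ((q - ε) * C.card) := by
    have : ((Γ.interedges D C).card : ℝ) = ∑ v ∈ D, ((C.filter (fun u => Γ.Adj v u)).card : ℝ) := by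
      rw [SimpleGraph.interedges, Rel.interedges, Finset.card_filter, Finset.sum_product]
      push_cast
      refine Finset.sum_congr rfl fun v hv => ?_
      rw [Finset.card_filter]
      push_cast
      rfl
    rw [this, ← nsmul_eq_mul, ← Finset.sum_const]
    refine Finset.sum_lt_sum_of_nonempty hDne fun v hv => ?_
    exact (Finset.mem_filter.1 hv).2
  have hCpos : (0:ℝ) < C.card := by
    rcases Nat.eq_zero_or_pos C.card with h | h
    · exfalso
      obtain ⟨v, hv⟩ := hDne
      have := (Finset.mem_filter.1 hv).2
      rw [Finset.card_eq_zero.1 h] at this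
      simp at this
    · exact_mod_cast h
  have hdens : (Γ.edgeDensity D C : ℝ) < q - ε := by
    rw [SimpleGraph.edgeDensity_def]
    push_cast
    rw [div_lt_iff₀ (by positivity)]
    nlinarith
  have := (abs_lt.1 h1).1
  linarith

open Classical in
lemma good_ext {K : ℕ} (H : SimpleGraph (Fin K)) {V : Type} (Γ : SimpleGraph V)
    [DecidableRel Γ.Adj]
    (W : Fin K → Finset V) (P : Fin K → Fin K → ℝ) (ε : ℝ) (hε : 0 < ε)
    (hu : ∀ i j, H.Adj i j → Γ.IsUniform ε (W i) (W j) ∧ P i j ≤ (Γ.edgeDensity (W i) (W j) : ℝ))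
    (hP : ∀ i j, H.Adj i j → ε ≤ P i j)
    (hpr : ∀ (j : ℕ) (l : Fin K), j ≤ l.val → ε ≤ pr H P ε j l)
    (J : Fin K) (x : Fin K → V) (hx : Good H Γ W P ε J.val x) :
    (pr H P ε J.val J - K * ε) * ((W J).card : ℝ) ≤
      (((cand H Γ W J.val x J).filter
        (fun v => Good H Γ W P ε (J.val + 1) (Function.update x J v))).card : ℝ) := by
  set B : Fin K → Finset V := fun l => if J.val < l.val ∧ H.Adj J l then
    (W J).filter (fun v => (((cand H Γ W J.val x l).filter (fun u => Γ.Adj v u)).card : ℝ)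
      < (P J l - ε) * (cand H Γ W J.val x l).card) else ∅ with hB
  have hBc : ∀ l, ((B l).card : ℝ) ≤ ε * (W J).card := by
    intro l
    simp only [hB]
    split_ifs with h
    · refine bad_card Γ _ _ _ ε _ hε (hu J l h.2).1 (hu J l h.2).2 (fun _ h => (mem_cand.1 h).1) ?_
      refine le_trans ?_ (hx l h.1.le)
      rw [mul_comm]
      exact mul_le_mul_of_nonneg_right (hpr _ _ h.1.le) (by positivity)
    · simp; positivity
  have hsub : cand H Γ W J.val x J ⊆ ((cand H Γ W J.val x J).filter
        (fun v => Good H Γ W P ε (J.val + 1) (Function.update x J v))) ∪ univ.biUnion B := by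
    intro v hv
    by_cases hvB : v ∈ univ.biUnion B
    · exact Finset.mem_union_right _ hvB
    refine Finset.mem_union_left _ (Finset.mem_filter.2 ⟨hv, ?_⟩)
    intro l hl
    have hne : ∀ i : Fin K, i.val < J.val → i ≠ J := by
      rintro i hi rfl; omega
    have hxl := hx l (by omega)
    by_cases hadj : H.Adj J l
    · have hvl : v ∉ B l := fun h => hvB (Finset.mem_biUnion.2 ⟨l, mem_univ _, h⟩)
      have hlt : J.val < l.val := by omega
      simp only [hB, hlt, hadj, and_self, if_true, Finset.mem_filter, not_and, not_lt] at hvl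
      have hvl' := hvl (mem_cand.1 hv).1
      have e1 : cand H Γ W (J.val+1) (Function.update x J v) l =
          (cand H Γ W J.val x l).filter (fun u => Γ.Adj v u) := by
        ext u
        simp only [mem_cand, Finset.mem_filter, and_assoc]
        refine and_congr_right fun _ => ⟨fun h => ⟨fun i hi hil => ?_, ?_⟩, fun h i hi hil => ?_⟩
        · have := h i (by omega) hil
          rwa [Function.update_of_ne (hne i hi)] at this
        · have := h J (by omega) hadj
          rwa [Function.update_self] at this
        · by_cases hiJ : i = J
          · subst hiJ; rw [Function.update_self]; exact h.2
          · rw [Function.update_of_ne hiJ]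
            have : i.val ≠ J.val := fun h => hiJ (Fin.ext h)
            exact h.1 i (by omega) hil
      have e2 : pr H P ε (J.val+1) l = (P J l - ε) * pr H P ε J.val l := by
        unfold pr
        rw [← Finset.prod_insert (f := fun i => P i l - ε)]
        · congr 1
          ext i
          simp only [Finset.mem_filter, Finset.mem_univ, true_and, Finset.mem_insert]
          constructor
          · rintro ⟨h1, h2⟩
            by_cases hiJ : i = J
            · exact Or.inl hiJ
            · have : i.val ≠ J.val := fun h => hiJ (Fin.ext h)
              exact Or.inr ⟨by omega, h2⟩
          · rintro (rfl | ⟨h1, h2⟩)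
            · exact ⟨by omega, hadj⟩
            · exact ⟨by omega, h2⟩
        · simp
      rw [e1, e2, mul_assoc]
      refine le_trans ?_ hvl'
      exact mul_le_mul_of_nonneg_left hxl (by linarith [hP J l hadj])
    · have hiff : ∀ i : Fin K, H.Adj i l → (i.val < J.val + 1 ↔ i.val < J.val) := by
        intro i hi
        have : i ≠ J := by rintro rfl; exact hadj hi
        have : i.val ≠ J.val := fun h => this (Fin.ext h)
        omega
      have e1 : cand H Γ W (J.val+1) (Function.update x J v) l = cand H Γ W J.val x l := by
        ext u
        rw [mem_cand, mem_cand]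
        refine and_congr_right fun hu => ?_
        refine forall_congr' fun i => ⟨fun h hi hil => ?_, fun h hi hil => ?_⟩
        · have := h (by omega) hil
          rwa [Function.update_of_ne (hne i hi)] at this
        · have hi' := (hiff i hil).1 hi
          rw [Function.update_of_ne (hne i hi')]
          exact h hi' hil
      have e2 : pr H P ε (J.val+1) l = pr H P ε J.val l := by
        unfold pr
        congr 1
        refine Finset.filter_congr fun i _ => ?_
        constructor
        · rintro ⟨a, b⟩; exact ⟨(hiff i b).1 a, b⟩
        · rintro ⟨a, b⟩; exact ⟨(hiff i b).2 a, b⟩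
      rw [e1, e2]; exact hxl
  have h1 := (Finset.card_le_card hsub).trans (Finset.card_union_le _ _)
  have h2 : (((univ : Finset (Fin K)).biUnion B).card : ℝ) ≤ K * (ε * (W J).card) := by
    have := Finset.card_biUnion_le (s := (univ : Finset (Fin K))) (t := B)
    calc (((univ : Finset (Fin K)).biUnion B).card : ℝ) ≤ ∑ l, ((B l).card : ℝ) := by
          exact_mod_cast this
      _ ≤ ∑ l : Fin K, ε * (W J).card := Finset.sum_le_sum fun l _ => hBc l
      _ = _ := by simp
  have h3 : ((cand H Γ W J.val x J).card : ℝ) ≤ (((cand H Γ W J.val x J).filter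
        (fun v => Good H Γ W P ε (J.val + 1) (Function.update x J v))).card : ℝ)
        + ((univ.biUnion B).card : ℝ) := by exact_mod_cast h1
  have h4 := hx J le_rfl
  nlinarith

open Classical in
/-- Pigeonhole step. -/
lemma pigeon {V : Type} (m : ℕ) (A : Finset V) (S : V → Finset (Fin m)) (r δ : ℝ)
    (hr : δ ≤ r) (hA : A.Nonempty)
    (hcount : ∀ a : Fin m, r * A.card ≤ ((A.filter (fun v => a ∈ S v)).card : ℝ))
    (hbig : (2:ℝ) ^ m * m ≤ δ * A.card) :
    ∃ I : Finset (Fin m), (r - δ) * m ≤ I.card ∧ m ≤ (A.filter (fun v => S v = I)).card := by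
  rcases Nat.eq_zero_or_pos m with rfl | hm
  · exact ⟨∅, by simp, by simp⟩
  by_contra hcon
  push Not at hcon
  have hmR : (0:ℝ) < m := by exact_mod_cast hm
  have hAR : (0:ℝ) < A.card := by exact_mod_cast hA.card_pos
  set G := A.filter (fun v => (r - δ) * m ≤ ((S v).card : ℝ)) with hG
  have hGc : (G.card : ℝ) < 2 ^ m * m := by
    set T : Finset (Finset (Fin m)) := univ.filter (fun I => (r - δ) * m ≤ (I.card : ℝ)) with hT
    have hmap : ∀ v ∈ G, S v ∈ T := by
      intro v hv
      simp only [hT, Finset.mem_filter, Finset.mem_univ, true_and]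
      exact (Finset.mem_filter.1 hv).2
    have h1 := Finset.card_eq_sum_card_fiberwise hmap
    have h2 : G.card ≤ ∑ I ∈ T, (m - 1) := by
      rw [h1]
      refine Finset.sum_le_sum fun I hI => ?_
      have := hcon I (Finset.mem_filter.1 hI).2
      have h3 : (G.filter (fun v => S v = I)).card ≤ (A.filter (fun v => S v = I)).card :=
        Finset.card_le_card (Finset.filter_subset_filter _ (Finset.filter_subset _ _))
      omega
    have h4 : T.card ≤ 2 ^ m := by
      have := Finset.card_le_univ T
      simpa using this
    have h5 : G.card ≤ 2 ^ m * (m - 1) := by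
      rw [Finset.sum_const, smul_eq_mul] at h2
      exact h2.trans (Nat.mul_le_mul_right _ h4)
    have h6 : G.card < 2 ^ m * m :=
      lt_of_le_of_lt h5 (Nat.mul_lt_mul_of_pos_left (by omega) (by positivity))
    exact_mod_cast h6
  have hdc : ∑ v ∈ A, ((S v).card : ℝ) = ∑ a : Fin m, ((A.filter (fun v => a ∈ S v)).card : ℝ) := by
    have : ∀ v, ((S v).card : ℝ) = ∑ a : Fin m, if a ∈ S v then (1:ℝ) else 0 := by
      intro v; simp
    simp_rw [this]
    rw [Finset.sum_comm]
    refine Finset.sum_congr rfl fun a _ => ?_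
    rw [Finset.card_filter]; push_cast; rfl
  have hlow : m * (r * A.card) ≤ ∑ v ∈ A, ((S v).card : ℝ) := by
    rw [hdc]
    calc m * (r * A.card) = ∑ a : Fin m, r * A.card := by simp
      _ ≤ _ := Finset.sum_le_sum fun a _ => hcount a
  have hup : ∑ v ∈ A, ((S v).card : ℝ) ≤ ∑ v ∈ A, ((r - δ) * m +
      if (r - δ) * m ≤ ((S v).card : ℝ) then (m:ℝ) else 0) := by
    refine Finset.sum_le_sum fun v _ => ?_
    have h0 : 0 ≤ (r - δ) * m := mul_nonneg (by linarith) hmR.le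
    have h1 : ((S v).card : ℝ) ≤ m := by
      have := Finset.card_le_univ (S v)
      simp at this
      exact_mod_cast this
    split_ifs with h
    · linarith
    · push Not at h; linarith
  rw [Finset.sum_add_distrib, Finset.sum_const, ← Finset.sum_filter, Finset.sum_const,
    nsmul_eq_mul, nsmul_eq_mul] at hup
  change _ ≤ _ + (G.card : ℝ) * m at hup
  have : (G.card : ℝ) * m < δ * A.card * m := mul_lt_mul_of_pos_right (hGc.trans_le hbig) hmR
  nlinarith

open Classical in
lemma state_step {K : ℕ} (H : SimpleGraph (Fin K)) {V : Type} (Γ : SimpleGraph V)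
    [DecidableRel Γ.Adj]
    (W : Fin K → Finset V) (P : Fin K → Fin K → ℝ) (ε : ℝ) (hε : 0 < ε)
    (hu : ∀ i j, H.Adj i j → Γ.IsUniform ε (W i) (W j) ∧ P i j ≤ (Γ.edgeDensity (W i) (W j) : ℝ))
    (hP : ∀ i j, H.Adj i j → ε ≤ P i j)
    (hpr : ∀ (j : ℕ) (l : Fin K), j ≤ l.val → ε ≤ pr H P ε j l)
    (J : Fin K) (m : ℕ) (hS : State H Γ W P ε J.val m) (δ : ℝ) (hδ : 0 < δ)
    (hr : δ ≤ pr H P ε J.val J - K * ε) (hne : (W J).Nonempty)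
    (hbig : (2:ℝ) ^ m * m ≤ δ * (W J).card) :
    ∃ m' : ℕ, m' ≤ m ∧ (pr H P ε J.val J - K * ε - δ) * m ≤ m' ∧
      State H Γ W P ε (J.val + 1) m' := by
  obtain ⟨X, hinj, hmem, hgood, hadj⟩ := hS
  obtain ⟨I, hI1, hI2⟩ := pigeon m (W J)
    (fun v => univ.filter (fun a => v ∈ cand H Γ W J.val (X a) J ∧
      Good H Γ W P ε (J.val + 1) (Function.update (X a) J v))) _ δ hr hne (by
        intro a
        refine (good_ext H Γ W P ε hε hu hP hpr J (X a) (hgood a)).trans ?_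
        norm_cast
        refine Finset.card_le_card fun v hv => ?_
        obtain ⟨h1, h2⟩ := Finset.mem_filter.1 hv
        exact Finset.mem_filter.2 ⟨(mem_cand.1 h1).1, by simp [h1, h2]⟩) hbig
  have hIm : I.card ≤ m := by simpa using Finset.card_le_univ I
  obtain ⟨U, hU1, hU2⟩ := Finset.exists_subset_card_eq (hIm.trans hI2)
  let e : Fin I.card ≃ I := (Finset.equivFin I).symm
  let f : Fin I.card ≃ U := (finCongr hU2.symm).trans (Finset.equivFin U).symm
  have key : ∀ c d, (f c : V) ∈ cand H Γ W J.val (X (e d)) J ∧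
      Good H Γ W P ε (J.val + 1) (Function.update (X (e d)) J (f c)) := by
    intro c d
    have h1 := (Finset.mem_filter.1 (hU1 (f c).2)).2
    have h2 := (Finset.ext_iff.1 h1 (e d).1).2 (e d).2
    exact (Finset.mem_filter.1 h2).2
  have hlt : ∀ i : Fin K, i.val < J.val + 1 → i ≠ J → i.val < J.val := by
    intro i hi hiJ
    have : i.val ≠ J.val := fun h => hiJ (Fin.ext h)
    omega
  refine ⟨I.card, hIm, hI1, fun c => Function.update (X (e c)) J (f c), ?_, ?_, ?_, ?_⟩
  · intro i hi
    by_cases hiJ : i = J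
    · subst hiJ
      intro c d hcd
      simp only [Function.update_self] at hcd
      exact f.injective (Subtype.ext hcd)
    · intro c d hcd
      simp only [Function.update_of_ne hiJ] at hcd
      exact e.injective (Subtype.ext (hinj i (hlt i hi hiJ) hcd))
  · intro i hi c
    by_cases hiJ : i = J
    · subst hiJ
      simp only [Function.update_self]
      exact (mem_cand.1 (key c c).1).1
    · simp only [Function.update_of_ne hiJ]
      exact hmem i (hlt i hi hiJ) _
  · intro c
    exact (key c c).2
  · intro i i' hi hi' hii c d
    by_cases hiJ : i = J
    · subst hiJ
      have hiJ' : i' ≠ i := hii.ne'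
      simp only [Function.update_self, Function.update_of_ne hiJ']
      exact ((mem_cand.1 (key c d).1).2 i' (hlt i' hi' hiJ') hii.symm).symm
    · by_cases hiJ' : i' = J
      · subst hiJ'
        simp only [Function.update_self, Function.update_of_ne hiJ]
        exact (mem_cand.1 (key d c).1).2 i (hlt i hi hiJ) hii
      · simp only [Function.update_of_ne hiJ, Function.update_of_ne hiJ']
        exact hadj i i' (hlt i hi hiJ) (hlt i' hi' hiJ') hii _ _

end BlowupAux

namespace BlowupAux

open Finset

open Classical in
lemma kst {V : Type} (A B : Finset V) (R : V → V → Prop) (c : ℝ) (hc : 0 ≤ c) (s : ℕ)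
    (hA : A.Nonempty) (hB : B.Nonempty)
    (hE : (c * A.card + s) * B.card ≤ ∑ b ∈ B, ((A.filter (fun a => R a b)).card : ℝ))
    (hbig : (s:ℝ) ≤ c ^ s * B.card) :
    ∃ f g : Fin s → V, Function.Injective f ∧ Function.Injective g ∧ (∀ i, f i ∈ A) ∧
      (∀ i, g i ∈ B) ∧ ∀ i j, R (f i) (g j) := by
  rcases Nat.eq_zero_or_pos s with rfl | hs
  · exact ⟨Fin.elim0, Fin.elim0, fun i => i.elim0, fun i => i.elim0, fun i => i.elim0,
      fun i => i.elim0, fun i => i.elim0⟩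
  have hAR : (0:ℝ) < A.card := by exact_mod_cast hA.card_pos
  have hBR : (0:ℝ) < B.card := by exact_mod_cast hB.card_pos
  have hex : ∃ S ∈ A.powersetCard s, s ≤ (B.filter (fun b => ∀ a ∈ S, R a b)).card := by
    by_contra hcon
    push Not at hcon
    set d : V → ℕ := fun b => (A.filter (fun a => R a b)).card with hd
    have h1 : ∑ b ∈ B, (d b).choose s = ∑ S ∈ A.powersetCard s,
        (B.filter (fun b => ∀ a ∈ S, R a b)).card := by
      have : ∀ b, (d b).choose s = ((A.powersetCard s).filter (fun S => ∀ a ∈ S, R a b)).card := by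
        intro b
        rw [hd, ← Finset.card_powersetCard]
        congr 1
        ext S
        simp only [Finset.mem_powersetCard, Finset.mem_filter, Finset.subset_iff]
        constructor
        · rintro ⟨h1, h2⟩
          exact ⟨⟨fun a ha => (h1 ha).1, h2⟩, fun a ha => (h1 ha).2⟩
        · rintro ⟨⟨h1, h2⟩, h3⟩
          exact ⟨fun a ha => ⟨h1 ha, h3 a ha⟩, h2⟩
      simp_rw [this]
      simp_rw [Finset.card_filter]
      rw [Finset.sum_comm]
    have h2 : ∑ b ∈ B, (d b).choose s ≤ A.card.choose s * (s - 1) := by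
      rw [h1, ← Finset.card_powersetCard, ← smul_eq_mul, ← Finset.sum_const]
      refine Finset.sum_le_sum fun S hS => ?_
      have := hcon S hS
      omega
    have h3 : ∑ b ∈ B, (d b + 1 - s) ^ s ≤ A.card ^ s * (s - 1) := by
      calc ∑ b ∈ B, (d b + 1 - s) ^ s ≤ ∑ b ∈ B, (d b).descFactorial s :=
            Finset.sum_le_sum fun b _ => Nat.pow_sub_le_descFactorial _ _
        _ = s.factorial * ∑ b ∈ B, (d b).choose s := by
            rw [Finset.mul_sum]
            exact Finset.sum_congr rfl fun b _ => Nat.descFactorial_eq_factorial_mul_choose _ _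
        _ ≤ s.factorial * (A.card.choose s * (s - 1)) := Nat.mul_le_mul_left _ h2
        _ = A.card.descFactorial s * (s - 1) := by
            rw [Nat.descFactorial_eq_factorial_mul_choose, mul_assoc]
        _ ≤ _ := Nat.mul_le_mul_right _ (Nat.descFactorial_le_pow _ _)
    have h3' : ∑ b ∈ B, ((d b + 1 - s : ℕ) : ℝ) ^ s ≤ (A.card : ℝ) ^ s * ((s - 1 : ℕ) : ℝ) := by
      exact_mod_cast h3
    have h4 : c * A.card * B.card ≤ ∑ b ∈ B, ((d b + 1 - s : ℕ) : ℝ) := by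
      have : ∑ b ∈ B, ((d b : ℝ) - s) ≤ ∑ b ∈ B, ((d b + 1 - s : ℕ) : ℝ) := by
        refine Finset.sum_le_sum fun b _ => ?_
        have : d b ≤ (d b + 1 - s) + s := by omega
        have : (d b : ℝ) ≤ ((d b + 1 - s : ℕ) : ℝ) + s := by exact_mod_cast this
        linarith
      rw [Finset.sum_sub_distrib, Finset.sum_const, nsmul_eq_mul] at this
      have hE' : (c * A.card + s) * B.card ≤ ∑ b ∈ B, (d b : ℝ) := hE
      nlinarith
    have h5 := pow_sum_div_card_le_sum_pow (s := B) (f := fun b => ((d b + 1 - s : ℕ) : ℝ))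
      (fun b _ => by positivity) (s - 1)
    rw [Nat.sub_add_cancel hs] at h5
    have h6 : (c * A.card * B.card) ^ s / (B.card : ℝ) ^ (s-1) ≤
        (A.card : ℝ) ^ s * ((s - 1 : ℕ) : ℝ) := by
      refine le_trans ?_ (h5.trans h3')
      gcongr
    have h7 : (c * A.card * B.card) ^ s / (B.card : ℝ) ^ (s-1) =
        (A.card : ℝ) ^ s * (c ^ s * B.card) := by
      rw [div_eq_iff (by positivity), mul_pow, mul_pow]
      have : (B.card : ℝ) ^ s = B.card * (B.card : ℝ) ^ (s-1) := by
        rw [← pow_succ', Nat.sub_add_cancel hs]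
      rw [this]; ring
    rw [h7] at h6
    have h8 := le_of_mul_le_mul_left h6 (by positivity)
    rw [Nat.cast_sub hs] at h8
    push_cast at h8
    linarith
  obtain ⟨S, hS, hSc⟩ := hex
  obtain ⟨hSA, hScard⟩ := Finset.mem_powersetCard.1 hS
  obtain ⟨U, hU1, hU2⟩ := Finset.exists_subset_card_eq hSc
  let f : Fin s ≃ S := (finCongr hScard.symm).trans (Finset.equivFin S).symm
  let g : Fin s ≃ U := (finCongr hU2.symm).trans (Finset.equivFin U).symm
  refine ⟨fun i => f i, fun i => g i, Subtype.val_injective.comp f.injective,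
    Subtype.val_injective.comp g.injective, fun i => hSA (f i).2,
    fun i => (Finset.mem_filter.1 (hU1 (g i).2)).1,
    fun i j => (Finset.mem_filter.1 (hU1 (g j).2)).2 _ (f i).2⟩

open Classical in
lemma state_two {k : ℕ} (H : SimpleGraph (Fin (k+2))) (h12 : H.Adj 0 1)
    {V : Type} (Γ : SimpleGraph V)
    [DecidableRel Γ.Adj]
    (W : Fin (k+2) → Finset V) (P : Fin (k+2) → Fin (k+2) → ℝ) (ε : ℝ) (hε : 0 < ε)
    (hu : ∀ i j, H.Adj i j → Γ.IsUniform ε (W i) (W j) ∧ P i j ≤ (Γ.edgeDensity (W i) (W j) : ℝ))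
    (hP : ∀ i j, H.Adj i j → ε ≤ P i j)
    (hpr : ∀ (j : ℕ) (l : Fin (k+2)), j ≤ l.val → ε ≤ pr H P ε j l)
    (hne : ∀ i, (W i).Nonempty) (s : ℕ) (c : ℝ) (hc : 0 ≤ c)
    (hr : 0 ≤ P 0 1 - ε - ((k+2 : ℕ) : ℝ) * ε)
    (hcs : c * (W 0).card + s ≤
      (1 - ((k+2 : ℕ) : ℝ) * ε) * (P 0 1 - ε - ((k+2 : ℕ) : ℝ) * ε) * (W 0).card)
    (hbig : (s:ℝ) ≤ c ^ s * (W 1).card) :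
    State H Γ W P ε 2 s := by
  obtain ⟨v0, -⟩ := hne 0
  set x : Fin (k+2) → V := fun _ => v0
  have pr0 : ∀ l, pr H P ε 0 l = 1 := by intro l; simp [pr]
  have pr1 : pr H P ε 1 1 = P 0 1 - ε := by
    unfold pr
    have : (univ.filter (fun i : Fin (k+2) => i.val < 1 ∧ H.Adj i 1)) = {0} := by
      ext i
      simp only [Finset.mem_filter, Finset.mem_univ, true_and, Finset.mem_singleton]
      constructor
      · rintro ⟨h, -⟩; apply Fin.ext; rw [Fin.val_zero]; omega
      · rintro rfl; exact ⟨by simp, h12⟩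
    rw [this, Finset.prod_singleton]
  have hg0 : Good H Γ W P ε (0 : Fin (k+2)).val x := by
    intro l _
    have : cand H Γ W (0 : Fin (k+2)).val x l = W l := by
      ext v; rw [mem_cand]; simp
    rw [this]
    simp [pr0]
  have hv1 : (1 : Fin (k+2)).val = 1 := by simp
  have e0 := good_ext H Γ W P ε hε hu hP hpr 0 x hg0
  set G0 := (cand H Γ W (0 : Fin (k+2)).val x 0).filter
        (fun v => Good H Γ W P ε ((0 : Fin (k+2)).val + 1) (Function.update x 0 v)) with hG0
  let R : V → V → Prop := fun a b => Good H Γ W P ε 1 (Function.update x 0 a) ∧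
    b ∈ cand H Γ W 1 (Function.update x 0 a) 1 ∧
    Good H Γ W P ε 2 (Function.update (Function.update x 0 a) 1 b)
  have hG0W : G0 ⊆ W 0 := fun v hv => (mem_cand.1 (Finset.mem_filter.1 hv).1).1
  have hE : (c * (W 0).card + s) * (W 1).card ≤
      ∑ b ∈ W 1, (((W 0).filter (fun a => R a b)).card : ℝ) := by
    have hdc : ∑ b ∈ W 1, (((W 0).filter (fun a => R a b)).card : ℝ)
        = ∑ a ∈ W 0, (((W 1).filter (fun b => R a b)).card : ℝ) := by
      simp_rw [Finset.card_filter]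
      push_cast
      rw [Finset.sum_comm]
    rw [hdc]
    calc (c * (W 0).card + s) * (W 1).card ≤ (1 - ((k+2 : ℕ) : ℝ) * ε) *
          (P 0 1 - ε - ((k+2 : ℕ) : ℝ) * ε) * (W 0).card * (W 1).card := by gcongr
      _ = ((1 - ((k+2 : ℕ) : ℝ) * ε) * (W 0).card) *
          ((P 0 1 - ε - ((k+2 : ℕ) : ℝ) * ε) * (W 1).card) := by ring
      _ ≤ G0.card * ((P 0 1 - ε - ((k+2 : ℕ) : ℝ) * ε) * (W 1).card) := by
          refine mul_le_mul_of_nonneg_right ?_ (by positivity)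
          have := e0
          rw [show (0 : Fin (k+2)).val = 0 by simp, pr0] at this
          exact this
      _ = ∑ a ∈ G0, ((P 0 1 - ε - ((k+2 : ℕ) : ℝ) * ε) * (W 1).card) := by simp
      _ ≤ ∑ a ∈ G0, (((W 1).filter (fun b => R a b)).card : ℝ) := by
          refine Finset.sum_le_sum fun a ha => ?_
          have hga : Good H Γ W P ε 1 (Function.update x 0 a) := by
            simpa using (Finset.mem_filter.1 ha).2
          have e1 := good_ext H Γ W P ε hε hu hP hpr 1 (Function.update x 0 a)
            (by rw [hv1]; exact hga)
          rw [hv1, pr1] at e1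
          refine e1.trans ?_
          norm_cast
          refine Finset.card_le_card fun b hb => ?_
          obtain ⟨h1, h2⟩ := Finset.mem_filter.1 hb
          exact Finset.mem_filter.2 ⟨(mem_cand.1 h1).1, hga, h1, h2⟩
      _ ≤ _ := Finset.sum_le_sum_of_subset_of_nonneg hG0W fun _ _ _ => by positivity
  obtain ⟨f, g, hf, hg, hfA, hgB, hR⟩ := kst (W 0) (W 1) R c hc s (hne 0) (hne 1)
    (by convert hE) hbig
  have h10 : (1 : Fin (k+2)) ≠ 0 := by simp
  have h01 : (0 : Fin (k+2)) ≠ 1 := by simp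
  have hcase : ∀ i : Fin (k+2), i.val < 2 → i = 0 ∨ i = 1 := by
    intro i hi
    rcases Nat.lt_or_ge i.val 1 with h | h
    · left; apply Fin.ext; rw [Fin.val_zero]; omega
    · right; apply Fin.ext; simp; omega
  have hadj : ∀ a b, Γ.Adj (f a) (g b) := by
    intro a b
    have := (mem_cand.1 (hR a b).2.1).2 0 (by simp) h12
    simpa using this
  refine ⟨fun a => Function.update (Function.update x 0 (f a)) 1 (g a), ?_, ?_, ?_, ?_⟩
  · intro i hi
    rcases hcase i hi with rfl | rfl
    · simpa [Function.update_of_ne h01] using hf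
    · simpa using hg
  · intro i hi a
    rcases hcase i hi with rfl | rfl
    · simpa [Function.update_of_ne h01] using hfA a
    · simpa using hgB a
  · intro a
    exact (hR a a).2.2
  · intro i i' hi hi' hii a b
    rcases hcase i hi with rfl | rfl <;> rcases hcase i' hi' with rfl | rfl
    · exact absurd hii (H.irrefl)
    · simpa [Function.update_of_ne h01] using hadj a b
    · simpa [Function.update_of_ne h01] using (hadj b a).symm
    · exact absurd hii (H.irrefl)

open Classical in
lemma state_iter {K : ℕ} (H : SimpleGraph (Fin K)) {V : Type} (Γ : SimpleGraph V)
    [DecidableRel Γ.Adj]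
    (W : Fin K → Finset V) (P : Fin K → Fin K → ℝ) (ε : ℝ) (hε : 0 < ε)
    (hu : ∀ i j, H.Adj i j → Γ.IsUniform ε (W i) (W j) ∧ P i j ≤ (Γ.edgeDensity (W i) (W j) : ℝ))
    (hP : ∀ i j, H.Adj i j → ε ≤ P i j)
    (hpr : ∀ (j : ℕ) (l : Fin K), j ≤ l.val → ε ≤ pr H P ε j l)
    (s : ℕ) (hS : State H Γ W P ε 2 s) (δ : ℝ) (hδ : 0 < δ)
    (hr : ∀ J : Fin K, δ ≤ pr H P ε J.val J - K * ε) (hne : ∀ i, (W i).Nonempty)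
    (hbig : ∀ i, (2:ℝ) ^ s * s ≤ δ * (W i).card) (j : ℕ) (hj : 2 ≤ j) (hjK : j ≤ K) :
    ∃ m : ℕ, m ≤ s ∧ (∏ i ∈ univ.filter (fun i : Fin K => 2 ≤ i.val ∧ i.val < j),
      (pr H P ε i.val i - K * ε - δ)) * s ≤ m ∧ State H Γ W P ε j m := by
  induction j, hj using Nat.le_induction with
  | base =>
    refine ⟨s, le_rfl, ?_, hS⟩
    rw [Finset.filter_false_of_mem (by intro i _; omega)]
    simp
  | succ j hj ih =>
    obtain ⟨m, hm, hprod, hst⟩ := ih (by omega)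
    let J : Fin K := ⟨j, by omega⟩
    have hb : (2:ℝ) ^ m * m ≤ δ * (W J).card := by
      refine le_trans ?_ (hbig J)
      have : (m:ℝ) ≤ s := by exact_mod_cast hm
      have h2 : (2:ℝ) ^ m ≤ 2 ^ s := pow_le_pow_right₀ (by norm_num) hm
      gcongr
    obtain ⟨m', hm', hmm, hst'⟩ := state_step H Γ W P ε hε hu hP hpr J m hst δ hδ (hr J) (hne J) hb
    refine ⟨m', hm'.trans hm, ?_, hst'⟩
    have hset : (univ.filter (fun i : Fin K => 2 ≤ i.val ∧ i.val < j + 1)) =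
        insert J (univ.filter (fun i : Fin K => 2 ≤ i.val ∧ i.val < j)) := by
      ext i
      simp only [Finset.mem_filter, Finset.mem_univ, true_and, Finset.mem_insert, J, Fin.ext_iff]
      omega
    rw [hset, Finset.prod_insert (by simp [J]), mul_assoc]
    refine le_trans ?_ hmm
    exact mul_le_mul_of_nonneg_left hprod (by linarith [hr J])

lemma prod_sub {ι : Type} (S : Finset ι) (a e : ι → ℝ) (h0 : ∀ i ∈ S, 0 ≤ e i)
    (h1 : ∀ i ∈ S, e i ≤ a i) (h2 : ∀ i ∈ S, a i ≤ 1) :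
    ∏ i ∈ S, a i - ∑ i ∈ S, e i ≤ ∏ i ∈ S, (a i - e i) := by
  classical
  induction S using Finset.induction_on with
  | empty => simp
  | insert b S hb ih =>
    rw [Finset.prod_insert hb, Finset.prod_insert hb, Finset.sum_insert hb]
    have ih' := ih (fun i hi => h0 i (by simp [hi])) (fun i hi => h1 i (by simp [hi]))
      (fun i hi => h2 i (by simp [hi]))
    have hA : ∏ i ∈ S, (a i - e i) ≤ 1 := Finset.prod_le_one
      (fun i hi => by linarith [h1 i (by simp [hi])])
      (fun i hi => by linarith [h0 i (by simp [hi]), h2 i (by simp [hi])])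
    have hs : 0 ≤ ∑ i ∈ S, e i := Finset.sum_nonneg fun i hi => h0 i (by simp [hi])
    have b0 := h0 b (by simp)
    have b1 := h1 b (by simp)
    have b2 := h2 b (by simp)
    nlinarith [mul_le_mul_of_nonneg_left ih' (b0.trans b1), mul_le_mul_of_nonneg_left hA b0,
      mul_le_mul_of_nonneg_right b2 hs]

lemma edge_prod {K : ℕ} (H : SimpleGraph (Fin K)) [DecidableRel H.Adj]
    (p : Sym2 (Fin K) → ℝ) :
    ∏ e ∈ H.edgeFinset, p e =
      ∏ j : Fin K, ∏ i ∈ univ.filter (fun i : Fin K => i.val < j.val ∧ H.Adj i j), p s(i, j) := by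
  rw [Finset.prod_sigma']
  symm
  refine Finset.prod_bij (fun x _ => s(x.2, x.1)) ?_ ?_ ?_ ?_
  · rintro ⟨j, i⟩ h
    simp at h ⊢
    exact h.2
  · rintro ⟨j, i⟩ h ⟨j', i'⟩ h' heq
    simp only [Finset.mem_sigma, Finset.mem_filter, Finset.mem_univ, true_and] at h h'
    rw [Sym2.eq_iff] at heq
    rcases heq with ⟨a, b⟩ | ⟨a, b⟩
    · simp only at a b; subst a; subst b; rfl
    · simp only at a b; subst a; subst b; omega
  · intro e
    induction e using Sym2.ind with
    | _ a b =>
    intro h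
    have hab : H.Adj a b := by simpa using h
    rcases lt_trichotomy a.val b.val with h1 | h1 | h1
    · exact ⟨⟨b, a⟩, by simpa [hab] using h1, rfl⟩
    · exact absurd (Fin.ext h1) hab.ne
    · exact ⟨⟨a, b⟩, by simpa [hab.symm] using h1, Sym2.eq_swap⟩
  · intro x _; rfl

open Filter in
lemma asymp (c δ Q η b : ℝ) (hc0 : 0 < c) (hc : c ≤ 1/2) (hδ : 0 < δ) (hδ1 : δ < 1) (hQ : 0 ≤ Q)
    (hη : 0 < η) (hb : b < Q * (1 - δ) / Real.log (1 / c)) :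
    ∃ n₀ : ℕ, ∀ n : ℕ, n₀ ≤ n → 1 ≤ n ∧ ∃ s : ℕ, (s:ℝ) ≤ η * n ∧ (s:ℝ) ≤ c ^ s * n ∧
      (2:ℝ) ^ s * s ≤ δ * n ∧ b * Real.log n ≤ Q * s := by
  set L := Real.log (1 / c) with hL
  have hLpos : 0 < L := Real.log_pos (by rw [lt_div_iff₀ hc0]; linarith)
  have hexpL : Real.exp L = 1 / c := Real.exp_log (by positivity)
  set μ := min 1 (min δ η) with hμ
  have hμ0 : 0 < μ := by positivity
  have ev1 : ∀ᶠ x : ℝ in atTop, Real.log x ≤ (L * μ) * x ^ δ := by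
    have := (isLittleO_log_rpow_atTop hδ).def (c := L * μ) (by positivity)
    filter_upwards [this, eventually_ge_atTop 1] with x hx h1
    rw [Real.norm_eq_abs, Real.norm_eq_abs, abs_of_nonneg (Real.log_nonneg h1),
      abs_of_nonneg (by positivity)] at hx
    exact hx
  have ev2 : ∀ᶠ x : ℝ in atTop, Q ≤ (Q * (1 - δ) / L - b) * Real.log x :=
    (Real.tendsto_log_atTop.const_mul_atTop (sub_pos.2 hb)).eventually_ge_atTop Q
  have ev := (tendsto_natCast_atTop_atTop (R := ℝ)).eventually
    ((ev1.and ev2).and (eventually_ge_atTop (1:ℝ)))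
  obtain ⟨n₀, hn₀⟩ := eventually_atTop.1 ev
  refine ⟨n₀, fun n hn => ?_⟩
  obtain ⟨⟨h1, h2⟩, h3⟩ := hn₀ n hn
  refine ⟨by exact_mod_cast h3, ⌊(1 - δ) * Real.log n / L⌋₊, ?_⟩
  set s := ⌊(1 - δ) * Real.log n / L⌋₊ with hs
  have hn0 : (0:ℝ) < n := by linarith
  have hlog : 0 ≤ Real.log n := Real.log_nonneg h3
  have hsle : (s:ℝ) ≤ (1 - δ) * Real.log n / L :=
    Nat.floor_le (div_nonneg (mul_nonneg (by linarith) hlog) hLpos.le)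
  have hsge : (1 - δ) * Real.log n / L - 1 ≤ s := (Nat.sub_one_lt_floor _).le
  have hsL : s * L ≤ (1 - δ) * Real.log n := by rwa [le_div_iff₀ hLpos] at hsle
  have hpow : (1 / c) ^ s ≤ (n:ℝ) ^ (1 - δ) := by
    rw [← hexpL, ← Real.exp_nat_mul, Real.rpow_def_of_pos hn0]
    exact Real.exp_le_exp.2 (by linarith)
  have hmul : (n:ℝ) ^ (1 - δ) * (n:ℝ) ^ δ = n := by
    rw [← Real.rpow_add hn0]; simp
  have hsn : (s:ℝ) ≤ μ * (n:ℝ) ^ δ := by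
    have : s * L ≤ μ * (n:ℝ) ^ δ * L := by nlinarith
    exact le_of_mul_le_mul_right this hLpos
  have hnd : (0:ℝ) < (n:ℝ) ^ δ := by positivity
  have hnle : (n:ℝ) ^ δ ≤ n := by
    calc (n:ℝ) ^ δ ≤ (n:ℝ) ^ (1:ℝ) := Real.rpow_le_rpow_of_exponent_le h3 hδ1.le
      _ = n := Real.rpow_one _
  have hm1 : μ ≤ 1 := min_le_left _ _
  have hm2 : μ ≤ δ := (min_le_right _ _).trans (min_le_left _ _)
  have hm3 : μ ≤ η := (min_le_right _ _).trans (min_le_right _ _)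
  refine ⟨?_, ?_, ?_, ?_⟩
  · calc (s:ℝ) ≤ μ * (n:ℝ) ^ δ := hsn
      _ ≤ η * n := by gcongr
  · have hcs : 0 < c ^ s := by positivity
    have : (n:ℝ) ^ δ ≤ c ^ s * n := by
      have h5 : 1 ≤ c ^ s * (n:ℝ) ^ (1 - δ) := by
        calc (1:ℝ) = c ^ s * (1 / c) ^ s := by
              rw [← mul_pow, mul_one_div_cancel hc0.ne', one_pow]
          _ ≤ _ := by gcongr
      calc (n:ℝ) ^ δ = 1 * (n:ℝ) ^ δ := by ring
        _ ≤ (c ^ s * (n:ℝ) ^ (1 - δ)) * (n:ℝ) ^ δ := by gcongr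
        _ = c ^ s * n := by rw [mul_assoc, hmul]
    refine hsn.trans (le_trans ?_ this)
    nlinarith
  · calc (2:ℝ) ^ s * s ≤ (1 / c) ^ s * s := by
          gcongr
          rw [le_div_iff₀ hc0]; linarith
      _ ≤ (n:ℝ) ^ (1 - δ) * (δ * (n:ℝ) ^ δ) := by
          refine mul_le_mul hpow (hsn.trans ?_) (by positivity) (by positivity)
          gcongr
      _ = δ * n := by rw [mul_left_comm, hmul]
  · have := mul_le_mul_of_nonneg_left hsge hQ
    have e : Q * ((1 - δ) * Real.log n / L - 1) = Q * (1 - δ) / L * Real.log n - Q := by ring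
    rw [e] at this
    nlinarith

end BlowupAux

namespace BlowupAux

open Finset

lemma edge_prod' {K : ℕ} (H : SimpleGraph (Fin K)) [DecidableRel H.Adj]
    (p : Sym2 (Fin K) → ℝ) :
    ∏ e ∈ H.edgeFinset, p e = ∏ j : Fin K, pr H (fun i j => p s(i, j)) 0 j.val j := by
  rw [edge_prod]
  refine Finset.prod_congr rfl fun j _ => ?_
  simp only [pr, sub_zero]
  congr!

open Classical in
lemma pr_lower {K : ℕ} (H : SimpleGraph (Fin K)) (P : Fin K → Fin K → ℝ) (ε : ℝ) (hε : 0 ≤ ε)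
    (hP : ∀ i j, H.Adj i j → ε ≤ P i j ∧ P i j ≤ 1) (j : ℕ) (l : Fin K) (hj : j ≤ l.val) :
    pr H P 0 l.val l - K * ε ≤ pr H P ε j l := by
  unfold pr
  simp only [sub_zero]
  have h1 := prod_sub (univ.filter (fun i : Fin K => i.val < j ∧ H.Adj i l)) (fun i => P i l)
    (fun _ => ε) (fun _ _ => hε) (fun i hi => (hP i l (by simpa using (Finset.mem_filter.1 hi).2.2)).1)
    (fun i hi => (hP i l (by simpa using (Finset.mem_filter.1 hi).2.2)).2)
  have h2 : ∏ i ∈ univ.filter (fun i : Fin K => i.val < l.val ∧ H.Adj i l), P i l ≤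
      ∏ i ∈ univ.filter (fun i : Fin K => i.val < j ∧ H.Adj i l), P i l := by
    rw [← Finset.prod_sdiff (s₁ := univ.filter (fun i : Fin K => i.val < j ∧ H.Adj i l))
      (s₂ := univ.filter (fun i : Fin K => i.val < l.val ∧ H.Adj i l))]
    · refine mul_le_of_le_one_left ?_ ?_
      · exact Finset.prod_nonneg fun i hi => hε.trans (hP i l (Finset.mem_filter.1 hi).2.2).1
      · refine Finset.prod_le_one (fun i hi => ?_) fun i hi => ?_
        · exact hε.trans (hP i l (Finset.mem_filter.1 (Finset.mem_sdiff.1 hi).1).2.2).1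
        · exact (hP i l (Finset.mem_filter.1 (Finset.mem_sdiff.1 hi).1).2.2).2
    · intro i hi
      obtain ⟨-, h, h'⟩ := Finset.mem_filter.1 hi
      exact Finset.mem_filter.2 ⟨mem_univ _, by omega, h'⟩
  have h3 : ∑ i ∈ univ.filter (fun i : Fin K => i.val < j ∧ H.Adj i l), ε ≤ K * ε := by
    rw [Finset.sum_const, nsmul_eq_mul]
    refine mul_le_mul_of_nonneg_right ?_ hε
    have := Finset.card_le_univ (univ.filter (fun i : Fin K => i.val < j ∧ H.Adj i l))
    rw [Fintype.card_fin] at this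
    exact_mod_cast this
  linarith

open Classical in
lemma pr_bounds {K : ℕ} (H : SimpleGraph (Fin K)) (P : Fin K → Fin K → ℝ)
    (hP01 : ∀ i j, H.Adj i j → 0 < P i j ∧ P i j ≤ 1) (j : Fin K) :
    0 < pr H P 0 j.val j ∧ pr H P 0 j.val j ≤ 1 := by
  constructor
  · refine Finset.prod_pos fun i hi => ?_
    have := (hP01 i j (Finset.mem_filter.1 hi).2.2).1
    linarith
  · refine Finset.prod_le_one (fun i hi => ?_) fun i hi => ?_
    · have := (hP01 i j (Finset.mem_filter.1 hi).2.2).1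
      linarith
    · have := (hP01 i j (Finset.mem_filter.1 hi).2.2).2
      linarith

lemma pr_one {k : ℕ} (H : SimpleGraph (Fin (k+2))) (h12 : H.Adj 0 1)
    (P : Fin (k+2) → Fin (k+2) → ℝ) (ε : ℝ) : pr H P ε 1 1 = P 0 1 - ε := by
  classical
  unfold pr
  rw [show (univ.filter (fun i : Fin (k+2) => i.val < 1 ∧ H.Adj i 1)) = {0} from ?_]
  · simp
  · ext i
    simp only [Finset.mem_filter, Finset.mem_univ, true_and, Finset.mem_singleton]
    constructor
    · rintro ⟨h, -⟩; apply Fin.ext; rw [Fin.val_zero]; omega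
    · rintro rfl; exact ⟨by simp, h12⟩

lemma split_two {k : ℕ} (f : Fin (k+2) → ℝ) : ∏ j, f j = f 0 * f 1 *
    ∏ j ∈ univ.filter (fun i : Fin (k+2) => 2 ≤ i.val ∧ i.val < k + 2), f j := by
  rw [← Finset.prod_filter_mul_prod_filter_not univ
    (fun i : Fin (k+2) => 2 ≤ i.val ∧ i.val < k + 2), mul_comm]
  congr 1
  rw [show (univ.filter (fun i : Fin (k+2) => ¬ (2 ≤ i.val ∧ i.val < k + 2))) = {0, 1} from ?_]
  · rw [Finset.prod_pair (by simp)]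
  · ext i
    simp only [Finset.mem_filter, Finset.mem_univ, true_and, Finset.mem_singleton,
      Finset.mem_insert, Fin.ext_iff, Fin.val_zero, Fin.val_one]
    omega

/-- The numerical heart: the loss in passing from `p` to `p''`. -/
lemma log_bound (p α e : ℝ) (hα : 0 < α) (hαp : α < p) (hp : p ≤ 1/2) (he : e ≤ 3 / 16 * α ^ 2) :
    0 < p - e ∧ Real.log (1 / (p - e)) ≤ Real.log (1 / p) * (1 + 3 / 10 * α) := by
  have hp0 : 0 < p := hα.trans hαp
  have h1 : p * (1 - 3 / 16 * α) ≤ p - e := by nlinarith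
  have hc : 0 < 1 - 3 / 16 * α := by linarith
  have h2 : 0 < p - e := lt_of_lt_of_le (by positivity) h1
  refine ⟨h2, ?_⟩
  have hL : 0.69 ≤ Real.log (1 / p) := by
    have : Real.log 2 ≤ Real.log (1 / p) :=
      Real.log_le_log (by norm_num) (by rw [le_div_iff₀ hp0]; linarith)
    linarith [Real.log_two_gt_d9]
  have h3 : Real.log (1 / (p - e)) ≤ Real.log (1 / p) + Real.log (1 / (1 - 3 / 16 * α)) := by
    rw [← Real.log_mul (by positivity) (by positivity)]
    refine Real.log_le_log (by positivity) ?_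
    rw [one_div_mul_one_div]
    exact one_div_le_one_div_of_le (by positivity) (by linarith)
  have h4 : Real.log (1 / (1 - 3 / 16 * α)) ≤ 1 / (1 - 3 / 16 * α) - 1 :=
    Real.log_le_sub_one_of_pos (by positivity)
  have h5 : 1 / (1 - 3 / 16 * α) - 1 ≤ 0.207 * α := by
    rw [sub_le_iff_le_add, div_le_iff₀ hc]
    nlinarith
  nlinarith

end BlowupAux

set_option maxHeartbeats 1000000 in
open BlowupAux Finset in
/-- Lemma 2.3, the main technical lemma. Let `H` be a graph on vertex set
`Fin (k+2)` with `0 ~ 1` an edge (playing the role of `{1,2}`). Given densities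
`p e ∈ (0,1]` for each edge `e` of `H` with `p s(0,1) ≤ 1/2`, and `0 < α < ∏_{e ∈ E(H)} p e`,
for all sufficiently large `n`: if `Γ` has disjoint vertex sets `W i` of size at least `n` such
that each pair `(W i, W j)` with `i ~ j` in `H` is `(α²/(8k²))`-regular of density at least
`p s(i,j)`, then `Γ` contains a canonical copy of `H[t]` (class `i` inside `W i`) with
`t = ⌊(∏_{e ∈ E(H), e ≠ s(0,1)} p e − α) · log n / log(1/p s(0,1))⌋`. -/
theorem blowup_in_regular_tuples (k : ℕ) (H : SimpleGraph (Fin (k + 2)))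
    [DecidableRel H.Adj] (h12 : H.Adj 0 1)
    (p : Sym2 (Fin (k + 2)) → ℝ)
    (hp : ∀ e ∈ H.edgeFinset, 0 < p e ∧ p e ≤ 1)
    (hp12 : p s(0, 1) ≤ 1 / 2)
    (α : ℝ) (hα0 : 0 < α) (hα1 : α < ∏ e ∈ H.edgeFinset, p e) :
    ∃ n₀ : ℕ, ∀ n : ℕ, n₀ ≤ n →
      ∀ (V : Type) [DecidableEq V] (Γ : SimpleGraph V) [DecidableRel Γ.Adj]
        (W : Fin (k + 2) → Finset V),
        (∀ i j, i ≠ j → Disjoint (W i) (W j)) →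
        (∀ i, n ≤ (W i).card) →
        (∀ i j, H.Adj i j →
          Γ.IsUniform (α ^ 2 / (8 * ((k : ℝ) + 2) ^ 2)) (W i) (W j) ∧
          p s(i, j) ≤ (Γ.edgeDensity (W i) (W j) : ℝ)) →
        ∃ ψ : Fin (k + 2) →
            Fin ⌊((∏ e ∈ H.edgeFinset.erase s(0, 1), p e) - α) *
              Real.log n / Real.log (1 / p s(0, 1))⌋₊ → V,
          (∀ i, Function.Injective (ψ i)) ∧
          (∀ i a, ψ i a ∈ W i) ∧
          (∀ i j, H.Adj i j → ∀ a b, Γ.Adj (ψ i a) (ψ j b)) := by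
  set P : Fin (k+2) → Fin (k+2) → ℝ := fun i j => p s(i, j) with hPdef
  set q := ∏ e ∈ H.edgeFinset.erase s(0, 1), p e with hq
  set ε := α ^ 2 / (8 * ((k : ℝ) + 2) ^ 2) with hεdef
  have hP01 : ∀ i j, H.Adj i j → 0 < P i j ∧ P i j ≤ 1 := fun i j h => hp _ (by simpa using h)
  have hmem01 : s(0, 1) ∈ H.edgeFinset := by simpa using h12
  have hprodq : p s(0,1) * q = ∏ e ∈ H.edgeFinset, p e := Finset.mul_prod_erase _ _ hmem01
  have hq1 : q ≤ 1 := Finset.prod_le_one (fun e he => (hp e (Finset.mem_of_mem_erase he)).1.le)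
    (fun e he => (hp e (Finset.mem_of_mem_erase he)).2)
  have hq0 : 0 < q := Finset.prod_pos (fun e he => (hp e (Finset.mem_of_mem_erase he)).1)
  have hp0 : 0 < p s(0,1) := (hp _ hmem01).1
  have hαp : α < p s(0,1) := by nlinarith
  have hαq : α < q := by nlinarith
  have hαhalf : α < 1/2 := by linarith
  have hk0 : (0:ℝ) ≤ k := by positivity
  have hε : 0 < ε := by positivity
  -- bounds on ε
  have hεK2 : ε * ((k:ℝ)+2)^2 = α^2/8 := by rw [hεdef]; field_simp
  have hεK : ((k:ℝ)+2) * ε ≤ α^2/16 := by nlinarith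
  have hε1 : ε ≤ α^2/32 := by nlinarith
  have hα2 : α^2 ≤ α/2 := by nlinarith
  set PP : Fin (k+2) → ℝ := fun j => pr H P 0 j.val j with hPP
  have hPP01 : ∀ j, 0 < PP j ∧ PP j ≤ 1 := fun j => pr_bounds H P hP01 j
  have hall : ∏ e ∈ H.edgeFinset, p e = ∏ j, PP j := edge_prod' H p
  have hPPα : ∀ j, α < PP j := by
    intro j
    refine hα1.trans_le ?_
    rw [hall, ← Finset.mul_prod_erase univ PP (Finset.mem_univ j)]
    exact mul_le_of_le_one_right (hPP01 j).1.le
      (Finset.prod_le_one (fun i _ => (hPP01 i).1.le) (fun i _ => (hPP01 i).2))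
  have hPP0 : PP 0 = 1 := by simp [hPP, pr]
  have hPP1 : PP 1 = p s(0,1) := by
    simp only [hPP, Fin.val_one]
    rw [pr_one H h12]; simp [hPdef]
  set F : Finset (Fin (k+2)) := univ.filter (fun i : Fin (k+2) => 2 ≤ i.val ∧ i.val < k + 2)
    with hF
  have hqF : ∏ j ∈ F, PP j = q := by
    have h := split_two PP
    rw [← hall, hPP0, hPP1, one_mul, ← hprodq] at h
    exact (mul_left_cancel₀ hp0.ne' h).symm
  have hPε : ∀ i j, H.Adj i j → ε ≤ P i j ∧ P i j ≤ 1 := by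
    intro i j hij
    refine ⟨?_, (hP01 i j hij).2⟩
    have h1 : ∏ e ∈ H.edgeFinset, p e ≤ P i j := by
      rw [← Finset.mul_prod_erase H.edgeFinset p (a := s(i,j)) (by simpa using hij)]
      exact mul_le_of_le_one_right (hP01 i j hij).1.le
        (Finset.prod_le_one (fun e he => (hp e (Finset.mem_of_mem_erase he)).1.le)
          (fun e he => (hp e (Finset.mem_of_mem_erase he)).2))
    linarith
  have hpl : ∀ (j : ℕ) (l : Fin (k+2)), j ≤ l.val → PP l - ((k+2 : ℕ) : ℝ) * ε ≤ pr H P ε j l :=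
    fun j l hj => pr_lower H P ε hε.le hPε j l hj
  have hcast : ((k+2 : ℕ) : ℝ) = (k:ℝ) + 2 := by push_cast; ring
  have hpr : ∀ (j : ℕ) (l : Fin (k+2)), j ≤ l.val → ε ≤ pr H P ε j l := by
    intro j l hj
    have h1 := hpl j l hj
    rw [hcast] at h1
    linarith [hPPα l]
  set r : Fin (k+2) → ℝ := fun j => pr H P ε j.val j - ((k+2 : ℕ) : ℝ) * ε with hr
  have hrlow : ∀ j, PP j - 2 * (((k:ℝ)+2) * ε) ≤ r j := by
    intro j
    have h1 := hpl j.val j le_rfl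
    simp only [hr]
    rw [hcast] at h1 ⊢
    linarith
  have hrα : ∀ j, α / 2 ≤ r j := by
    intro j
    linarith [hrlow j, hPPα j]
  have hQ0 : q - α^2/4 ≤ ∏ j ∈ F, r j := by
    have h1 := prod_sub F PP (fun _ => 2 * (((k:ℝ)+2) * ε)) (fun _ _ => by positivity)
      (fun i _ => by linarith [hPPα i]) (fun i _ => (hPP01 i).2)
    rw [hqF, Finset.sum_const, nsmul_eq_mul] at h1
    have h2 : (F.card : ℝ) ≤ (k:ℝ) + 2 := by
      have := Finset.card_le_univ F
      rw [Fintype.card_fin] at this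
      rw [← hcast]
      exact_mod_cast this
    have h3 : (F.card : ℝ) * (2 * (((k:ℝ)+2) * ε)) ≤ ((k:ℝ)+2) * (2 * (((k:ℝ)+2) * ε)) := by
      gcongr
    have h4 : ∏ j ∈ F, (PP j - 2 * (((k:ℝ)+2) * ε)) ≤ ∏ j ∈ F, r j :=
      Finset.prod_le_prod (fun i _ => by linarith [hPPα i]) (fun i _ => hrlow i)
    have h5 : ((k:ℝ)+2) * (2 * (((k:ℝ)+2) * ε)) = α^2/4 := by linear_combination 2 * hεK2
    linarith
  set e := (2 * ((k:ℝ)+2) + 2) * ε with he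
  have he1 : e ≤ 3 / 16 * α^2 := by
    have : e = 2 * (((k:ℝ)+2) * ε) + 2 * ε := by rw [he]; ring
    linarith
  obtain ⟨hc0, hLL⟩ := log_bound (p s(0,1)) α e hα0 hαp hp12 he1
  have he0 : 0 < e := by positivity
  set c := p s(0,1) - e with hc
  set L := Real.log (1 / p s(0,1)) with hL
  set L' := Real.log (1 / c) with hL'
  have hLpos : 0 < L := Real.log_pos (by rw [lt_div_iff₀ hp0]; linarith)
  have hL'pos : 0 < L' := Real.log_pos (by rw [lt_div_iff₀ hc0]; linarith)
  have hmain : (q - α) / L < (∏ j ∈ F, r j) / L' := by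
    rw [div_lt_div_iff₀ hLpos hL'pos]
    have h1 : (q - α) * L' ≤ (q - α) * (L * (1 + 3/10 * α)) :=
      mul_le_mul_of_nonneg_left hLL (by linarith)
    have h2 : (q - α) * (1 + 3/10*α) < q - α^2/4 := by nlinarith
    have h3 : (q - α) * (1 + 3/10*α) * L < (∏ j ∈ F, r j) * L :=
      mul_lt_mul_of_pos_right (h2.trans_le hQ0) hLpos
    linarith
  -- choose δ
  obtain ⟨δ, hδ0, hδ1, hδα, hδb⟩ : ∃ δ : ℝ, 0 < δ ∧ δ < 1 ∧ δ < α / 2 ∧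
      (q - α) / L < (∏ j ∈ F, (r j - δ)) * (1 - δ) / L' := by
    have hcont : Continuous (fun δ : ℝ => (∏ j ∈ F, (r j - δ)) * (1 - δ) / L') := by fun_prop
    have h1 : ∀ᶠ δ in nhds (0:ℝ), (q - α) / L < (∏ j ∈ F, (r j - δ)) * (1 - δ) / L' := by
      refine hcont.continuousAt.eventually (lt_mem_nhds ?_)
      simpa using hmain
    have h2 := (h1.and ((gt_mem_nhds (show (0:ℝ) < 1 by norm_num)).and
      (gt_mem_nhds (show (0:ℝ) < α/2 by linarith))))
    have h3 := (h2.filter_mono (nhdsWithin_le_nhds (s := Set.Ioi 0))).and self_mem_nhdsWithin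
    obtain ⟨δ, ⟨h4, h5, h6⟩, h7⟩ := h3.exists
    exact ⟨δ, h7, h5, h6, h4⟩
  have hQnn : 0 ≤ ∏ j ∈ F, (r j - δ) := Finset.prod_nonneg fun j _ => by linarith [hrα j]
  obtain ⟨n₀, hn₀⟩ := asymp c δ (∏ j ∈ F, (r j - δ)) ε ((q - α) / L) hc0 (by linarith) hδ0 hδ1
    hQnn hε hδb
  refine ⟨n₀, fun n hn V _ Γ _ W _ hWn hreg => ?_⟩
  obtain ⟨hn1, s, hs1, hs2, hs3, hs4⟩ := hn₀ n hn
  have hWR : ∀ i, (n:ℝ) ≤ (W i).card := fun i => by exact_mod_cast hWn i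
  have hne : ∀ i, (W i).Nonempty := fun i => Finset.card_pos.1 (by have := hWn i; omega)
  have hst2 : State H Γ W P ε 2 s := by
    refine state_two H h12 Γ W P ε hε hreg (fun i j h => (hPε i j h).1) hpr hne s c hc0.le ?_ ?_ ?_
    · rw [hcast]
      change 0 ≤ p s(0,1) - ε - _
      linarith
    · rw [hcast]
      change _ ≤ (1 - ((k:ℝ)+2) * ε) * (p s(0,1) - ε - ((k:ℝ)+2) * ε) * _
      have h1 : (s:ℝ) ≤ ε * (W 0).card := hs1.trans (by gcongr; exact hWn 0)
      have h2 : c + ε ≤ (1 - ((k:ℝ)+2) * ε) * (p s(0,1) - ε - ((k:ℝ)+2) * ε) := by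
        have hKε : 0 ≤ ((k:ℝ)+2) * ε := by positivity
        rw [hc, he]
        nlinarith
      calc c * (W 0).card + s ≤ (c + ε) * (W 0).card := by linarith
        _ ≤ _ := by gcongr
    · exact hs2.trans (by gcongr; exact hWn 1)
  obtain ⟨m, -, hm, X, hX1, hX2, -, hX4⟩ := state_iter H Γ W P ε hε hreg
    (fun i j h => (hPε i j h).1) hpr s hst2 δ hδ0 (fun J => by
      have := hrα J
      simp only [hr] at this
      linarith) hne (fun i => hs3.trans (by gcongr; exact hWn i)) (k+2) (by omega) le_rfl
  have ht : ⌊(q - α) * Real.log n / L⌋₊ ≤ m := by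
    have h1 : (q - α) * Real.log n / L ≤ m := by
      have : (q - α) * Real.log n / L = (q - α) / L * Real.log n := by ring
      rw [this]
      exact hs4.trans hm
    exact Nat.floor_le_of_le h1
  refine ⟨fun i a => X (Fin.castLE ht a) i, fun i a b hab => ?_, fun i a => hX2 i i.2 _,
    fun i j hij a b => hX4 i j i.2 j.2 hij _ _⟩
  exact Fin.castLE_injective ht (hX1 i i.2 hab)
end

section
/- For every η > 0 and every graph H on k vertices with at least one edge, the following holds with λ = η^{k²} for all n sufficiently large. If G is a graph on n vertices containing at least η n^k copies of H (i.e., at least η n^k subgraphs of G isomorphic to H), then G contains a copy of the blowup H[t] with t = ⌊λ log n⌋. -/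
/-- Averaging over cyclic shifts: an injective choice doing at least as well as average. -/
lemma exists_inj_choice {V J : Type} [DecidableEq V] [Fintype J] (C : Finset V)
    (hC : Fintype.card J ≤ C.card) (hC0 : C.Nonempty) (f : J → V → ℝ) (Y : ℝ)
    (h : Y * C.card ≤ ∑ v ∈ C, ∑ j, f j v) :
    ∃ g : J → V, Function.Injective g ∧ (∀ j, g j ∈ C) ∧ Y ≤ ∑ j, f j (g j) := by
  classical
  obtain ⟨c, hc⟩ : ∃ c, C.card = c := ⟨_, rfl⟩
  have hcpos : 0 < c := hc ▸ hC0.card_pos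
  have : NeZero c := ⟨hcpos.ne'⟩
  let e : Fin c ≃ C := (C.equivFinOfCardEq hc).symm
  let i : J → Fin c := fun j => Fin.castLE (hc ▸ hC) (Fintype.equivFin J j)
  have hi : Function.Injective i := fun a b hab => by
    simpa [i] using hab
  have hsum : ∑ s : Fin c, Y ≤ ∑ s : Fin c, ∑ j, f j (e (i j + s)) := by
    rw [Finset.sum_comm]
    have : ∀ j, ∑ s : Fin c, f j (e (i j + s)) = ∑ v ∈ C, f j v := by
      intro j
      rw [← Finset.sum_coe_sort C]
      exact Fintype.sum_equiv ((Equiv.addLeft (i j)).trans e) _ _ (fun s => rfl)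
    simp_rw [this]
    rw [Finset.sum_comm]
    simpa [hc, mul_comm] using h
  obtain ⟨s, -, hs⟩ := Finset.exists_le_of_sum_le (Finset.univ_nonempty) hsum
  refine ⟨fun j => e (i j + s), ?_, fun j => (e _).2, hs⟩
  intro a b hab
  have := e.injective (Subtype.ext hab)
  exact hi (add_right_cancel this)

lemma core {V J : Type} [Fintype V] [Nonempty V] [DecidableEq V] [Fintype J] [DecidableEq J]
    (E : ℝ) (hE0 : 0 ≤ E)
    (hE : (2 : ℝ) ^ Fintype.card J * Fintype.card J * Fintype.card J ≤ E * Fintype.card V) :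
    ∀ (k : ℕ) (M : J → Finset (Fin k → V)) (X : ℝ),
      X * (Fintype.card V : ℝ) ^ k ≤ ∑ j, ((M j).card : ℝ) →
      ∃ (S : Finset J) (v : Fin k → J → V), X - k * E ≤ S.card ∧
        (∀ b, Set.InjOn (v b) S) ∧ (∀ j ∈ S, (M j).Nonempty) ∧
        (∀ b, ∀ j ∈ S, ∀ j' ∈ S, ∃ x ∈ M j, (∀ a, a < b → x a = v a j) ∧ x b = v b j') := by
  intro k
  induction k with
  | zero =>
    intro M X h
    refine ⟨Finset.univ.filter (fun j => (M j).Nonempty), fun b => b.elim0, ?_,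
      fun b => b.elim0, by simp, fun b => b.elim0⟩
    have h1 : ∀ j, ((M j).card : ℝ) ≤ if (M j).Nonempty then 1 else 0 := by
      intro j
      split_ifs with hj
      · have : (M j).card ≤ 1 := Finset.card_le_one_of_subsingleton _
        exact_mod_cast this
      · simp [Finset.not_nonempty_iff_eq_empty.mp hj]
    have h2 := Finset.sum_le_sum (fun j (_ : j ∈ Finset.univ) => h1 j)
    rw [Finset.sum_boole] at h2
    simp at h
    simp
    linarith
  | succ k ih =>
    intro M X h
    set n := Fintype.card V with hn
    set m := Fintype.card J with hm
    have hnpos : (0 : ℝ) < n := by exact_mod_cast Fintype.card_pos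
    have htriv : X - E ≤ 0 → ∃ (S : Finset J) (v : Fin (k+1) → J → V), X - (k+1 : ℕ) * E ≤ S.card ∧
        (∀ b, Set.InjOn (v b) S) ∧ (∀ j ∈ S, (M j).Nonempty) ∧
        (∀ b, ∀ j ∈ S, ∀ j' ∈ S, ∃ x ∈ M j, (∀ a, a < b → x a = v a j) ∧ x b = v b j') := by
      intro hX
      refine ⟨∅, fun _ _ => Classical.arbitrary V, ?_, by simp, by simp, by simp⟩
      have : 0 ≤ (k : ℝ) * E := by positivity
      push_cast
      simp only [Finset.card_empty, Nat.cast_zero]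
      linarith
    by_cases hY : X - E ≤ 0
    · exact htriv hY
    push Not at hY
    -- links
    let L : J → V → Finset (Fin k → V) := fun j v =>
      Finset.univ.filter (fun y => (Fin.cons v y : Fin (k+1) → V) ∈ M j)
    have hL : ∀ j, ((M j).card : ℝ) = ∑ v, ((L j v).card : ℝ) := by
      intro j
      have : (M j).card = ∑ v, (L j v).card := by
        rw [Finset.card_eq_sum_card_fiberwise (f := fun x => x 0) (t := Finset.univ)
          (fun x _ => by simp)]
        refine Finset.sum_congr rfl fun v _ => ?_
        symm
        refine Finset.card_bij (fun y _ => (Fin.cons v y : Fin (k+1) → V)) ?_ ?_ ?_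
        · intro y hy
          simpa [L] using hy
        · intro y _ y' _ hyy
          exact (Fin.cons_right_injective (α := fun _ => V) v) hyy
        · intro x hx
          simp only [Finset.mem_filter] at hx
          refine ⟨Fin.tail x, ?_, ?_⟩
          · simp only [L, Finset.mem_filter, Finset.mem_univ, true_and]
            rw [← hx.2, Fin.cons_self_tail]; exact hx.1
          · rw [← hx.2, Fin.cons_self_tail]
      exact_mod_cast this
    have hLle : ∀ j v, ((L j v).card : ℝ) ≤ (n : ℝ) ^ k := by
      intro j v
      have : (L j v).card ≤ n ^ k := by
        refine (Finset.card_le_univ _).trans ?_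
        simp [hn]
      exact_mod_cast this
    let F : V → ℝ := fun v => ∑ j, ((L j v).card : ℝ)
    have hF : X * (n : ℝ) ^ (k+1) ≤ ∑ v, F v := by
      refine h.trans (le_of_eq ?_)
      simp_rw [hL]
      rw [Finset.sum_comm]
    have hFle : ∀ v, F v ≤ m * (n : ℝ) ^ k := by
      intro v
      refine (Finset.sum_le_sum (fun j _ => hLle j v)).trans ?_
      simp [hm]
    let P : V → Finset J := fun v => Finset.univ.filter (fun j => (L j v).Nonempty)
    let cls : Finset J → Finset V := fun N => Finset.univ.filter (fun v => P v = N)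
    let B : Finset V := Finset.univ.filter (fun v => m ≤ (cls (P v)).card)
    let D : Finset V := Finset.univ.filter (fun v => ¬ m ≤ (cls (P v)).card)
    have hsplit : ∑ v ∈ B, F v + ∑ v ∈ D, F v = ∑ v, F v :=
      Finset.sum_filter_add_sum_filter_not _ _ _
    have hDcard : (D.card : ℝ) ≤ 2 ^ m * m := by
      have h1 : D.card ≤ m * (D.image P).card := by
        refine Finset.card_le_mul_card_image D m ?_
        intro N hN
        obtain ⟨w, hw, rfl⟩ := Finset.mem_image.mp hN
        have hw' : ¬ m ≤ (cls (P w)).card := by simpa [D] using hw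
        refine le_trans (Finset.card_le_card ?_) (not_le.mp hw').le
        intro x hx
        simp only [Finset.mem_filter] at hx
        simp [cls, hx.2]
      have h2 : (D.image P).card ≤ 2 ^ m := by
        refine (Finset.card_le_univ _).trans ?_
        simp [hm]
      have : D.card ≤ 2 ^ m * m := by
        rw [mul_comm]; exact h1.trans (Nat.mul_le_mul_left _ h2)
      exact_mod_cast this
    have hDsum : ∑ v ∈ D, F v ≤ E * (n : ℝ) ^ (k+1) := by
      calc ∑ v ∈ D, F v ≤ ∑ v ∈ D, m * (n : ℝ) ^ k := Finset.sum_le_sum (fun v _ => hFle v)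
        _ = D.card * (m * (n : ℝ) ^ k) := by simp
        _ ≤ (2 ^ m * m) * (m * (n : ℝ) ^ k) := by gcongr
        _ = (2 ^ m * m * m) * (n : ℝ) ^ k := by ring
        _ ≤ (E * n) * (n : ℝ) ^ k := by gcongr
        _ = _ := by ring
    have hBsum : (X - E) * (n : ℝ) ^ (k+1) ≤ ∑ v ∈ B, F v := by
      have : (X - E) * (n : ℝ) ^ (k+1) = X * (n : ℝ) ^ (k+1) - E * (n : ℝ) ^ (k+1) := by ring
      linarith
    have hBne : B.Nonempty := by
      rw [Finset.nonempty_iff_ne_empty]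
      intro hB
      rw [hB] at hBsum
      have : 0 < (X - E) * (n : ℝ) ^ (k+1) := by positivity
      simp at hBsum
      linarith
    have hBle : (B.card : ℝ) ≤ n := by exact_mod_cast Finset.card_le_univ B
    have hBdiff : 0 ≤ ∑ v ∈ B, (F v - (X - E) * (n : ℝ) ^ k) := by
      rw [Finset.sum_sub_distrib]
      have : (B.card : ℝ) * ((X - E) * (n : ℝ) ^ k) ≤ n * ((X - E) * (n : ℝ) ^ k) := by gcongr
      have e1 : n * ((X - E) * (n : ℝ) ^ k) = (X - E) * (n : ℝ) ^ (k+1) := by ring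
      simp only [Finset.sum_const, nsmul_eq_mul]
      linarith
    have hfib : ∑ N ∈ B.image P, ∑ v ∈ B.filter (fun v => P v = N),
        (F v - (X - E) * (n : ℝ) ^ k) = ∑ v ∈ B, (F v - (X - E) * (n : ℝ) ^ k) :=
      Finset.sum_fiberwise_of_maps_to (fun v hv => Finset.mem_image_of_mem P hv) _
    obtain ⟨N, hN, hNsum⟩ : ∃ N ∈ B.image P, (0 : ℝ) ≤ ∑ v ∈ B.filter (fun v => P v = N),
        (F v - (X - E) * (n : ℝ) ^ k) := by
      refine Finset.exists_le_of_sum_le (hBne.image P) ?_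
      rw [hfib]; simpa using hBdiff
    obtain ⟨w, hw, rfl⟩ := Finset.mem_image.mp hN
    have hw' : m ≤ (cls (P w)).card := by simpa [B] using hw
    have hcls : B.filter (fun v => P v = P w) = cls (P w) := by
      ext x
      simp only [B, cls, Finset.mem_filter, Finset.mem_univ, true_and, and_iff_right_iff_imp]
      intro hx
      rw [hx]; exact hw'
    rw [hcls, Finset.sum_sub_distrib] at hNsum
    simp only [Finset.sum_const, nsmul_eq_mul] at hNsum
    have hwmem : w ∈ cls (P w) := by simp [cls]
    obtain ⟨g, hginj, hgC, hg⟩ := exists_inj_choice (cls (P w)) hw' ⟨w, hwmem⟩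
      (fun j v => ((L j v).card : ℝ)) ((X - E) * (n : ℝ) ^ k) (by
        have : ∑ v ∈ cls (P w), F v = ∑ v ∈ cls (P w), ∑ j, ((L j v).card : ℝ) := rfl
        linarith)
    obtain ⟨S, v, hS, hinj, hne, hcomp⟩ := ih (fun j => L j (g j)) (X - E) hg
    have hPg : ∀ j, P (g j) = P w := fun j => by simpa [cls] using hgC j
    have hSP : ∀ j ∈ S, j ∈ P w := by
      intro j hj
      rw [← hPg j]
      simpa [P] using hne j hj
    refine ⟨S, Fin.cons g v, ?_, ?_, ?_, ?_⟩
    · push_cast; linarith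
    · intro b
      refine Fin.cases ?_ (fun b => ?_) b
      · simpa using hginj.injOn
      · simpa using hinj b
    · intro j hj
      obtain ⟨y, hy⟩ := hne j hj
      exact ⟨_, (Finset.mem_filter.mp hy).2⟩
    · intro b j hj j' hj'
      refine Fin.cases ?_ (fun b => ?_) b
      · have : j ∈ P (g j') := by rw [hPg]; exact hSP j hj
        obtain ⟨y, hy⟩ := (Finset.mem_filter.mp this).2
        exact ⟨_, (Finset.mem_filter.mp hy).2, by simp, by simp⟩
      · obtain ⟨y, hy, hy1, hy2⟩ := hcomp b j hj j' hj'
        refine ⟨_, (Finset.mem_filter.mp hy).2, ?_, by simpa using hy2⟩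
        intro a
        refine Fin.cases (by simp) (fun a => ?_) a
        intro hab
        simpa using hy1 a (by simpa using hab)

lemma asymptotics (η : ℝ) (h0 : 0 < η) (h1 : η < 1) (k : ℕ) (hk : 2 ≤ k) :
    ∃ N : ℕ, ∀ n : ℕ, N ≤ n → 1 ≤ n ∧
      (2 : ℝ) ^ ⌊Real.log n⌋₊ * ⌊Real.log n⌋₊ * ⌊Real.log n⌋₊ ≤ 1 * n ∧
      η ^ (k ^ 2) * Real.log n ≤ ⌊Real.log n⌋₊ * η - k * 1 := by
  have hlog : Filter.Tendsto (fun n : ℕ => Real.log n) Filter.atTop Filter.atTop :=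
    Real.tendsto_log_atTop.comp tendsto_natCast_atTop_atTop
  have hgap : 0 < η - η ^ (k ^ 2) := by
    have : η ^ (k ^ 2) < η ^ 1 := pow_lt_pow_right_of_lt_one₀ h0 h1 (by nlinarith)
    simpa using this
  have e1 := hlog.eventually_ge_atTop ((k + η) / (η - η ^ (k ^ 2)))
  have e2 : ∀ᶠ n : ℕ in Filter.atTop, (Real.log n) ^ 2 ≤ (n : ℝ) ^ (0.3 : ℝ) := by
    have := (isLittleO_log_rpow_rpow_atTop (s := 0.3) 2 (by norm_num)).bound (c := 1) (by norm_num)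
    have := tendsto_natCast_atTop_atTop (R := ℝ) |>.eventually this
    filter_upwards [this] with n hn
    have hn' := (le_abs_self _).trans hn
    rw [Real.norm_of_nonneg (by positivity)] at hn'
    simpa using hn'
  obtain ⟨N, hN⟩ := Filter.eventually_atTop.mp
    ((e1.and e2).and (Filter.eventually_ge_atTop 1))
  refine ⟨N, fun n hn => ?_⟩
  obtain ⟨⟨a1, a2⟩, a3⟩ := hN n hn
  have hn1 : (1 : ℝ) ≤ n := by exact_mod_cast a3
  have hl0 : 0 ≤ Real.log n := Real.log_nonneg hn1
  have hfl := Nat.floor_le hl0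
  have hlf := Nat.lt_floor_add_one (Real.log n)
  set m := ⌊Real.log n⌋₊ with hm
  refine ⟨a3, ?_, ?_⟩
  · have b1 : (2 : ℝ) ^ m ≤ (n : ℝ) ^ (0.7 : ℝ) := by
      rw [← Real.rpow_natCast, Real.rpow_def_of_pos (by norm_num), Real.rpow_def_of_pos (by linarith)]
      apply Real.exp_le_exp.mpr
      have := Real.log_two_lt_d9
      have h2 := Real.log_two_gt_d9
      calc Real.log 2 * m ≤ 0.7 * Real.log n := by
            apply mul_le_mul _ hfl (by positivity) (by norm_num)
            linarith
        _ = _ := by ring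
    have b2 : (m : ℝ) * m ≤ (n : ℝ) ^ (0.3 : ℝ) := by
      refine le_trans ?_ a2
      nlinarith
    calc (2 : ℝ) ^ m * m * m = (2 : ℝ) ^ m * (m * m) := by ring
      _ ≤ (n : ℝ) ^ (0.7 : ℝ) * (n : ℝ) ^ (0.3 : ℝ) := by gcongr
      _ = (n : ℝ) ^ ((0.7 : ℝ) + 0.3) := by rw [Real.rpow_add (by linarith)]
      _ = 1 * n := by norm_num
  · rw [div_le_iff₀ hgap] at a1
    nlinarith

/-- Nikiforov's theorem, general graphs. For every `η > 0` and every graph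
`H` on `k` vertices with at least one edge, with `λ = η^(k²)`, for all sufficiently large `n`:
every graph `G` on `n` vertices containing at least `η n^k` copies of `H` (subgraphs of `G`
isomorphic to `H`) contains the blowup `H[t]` with `t = ⌊λ log n⌋`. -/
theorem nikiforov_original (η : ℝ) (hη : 0 < η)
    (α : Type) [Fintype α] (H : SimpleGraph α) (hH : ∃ x y, H.Adj x y) :
    ∃ N : ℕ, ∀ n : ℕ, N ≤ n → ∀ G : SimpleGraph (Fin n),
      η * (n : ℝ) ^ (Fintype.card α) ≤
        (Nat.card {G' : G.Subgraph // Nonempty (G'.coe ≃g H)} : ℝ) →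
      ContainsCopy (blowupGraph H ⌊η ^ (Fintype.card α ^ 2) * Real.log n⌋₊) G := by
  classical
  obtain ⟨k, hk⟩ : ∃ k, Fintype.card α = k := ⟨_, rfl⟩
  rw [hk]
  obtain ⟨x, y, hxy⟩ := hH
  have hk2 : 2 ≤ k := by
    rw [← hk]
    exact Fintype.one_lt_card_iff.mpr ⟨x, y, hxy.ne⟩
  let e : α ≃ Fin k := Fintype.equivFinOfCardEq hk
  let M : (n : ℕ) → SimpleGraph (Fin n) → Finset (Fin k → Fin n) := fun n G =>
    Finset.univ.filter (fun f => Function.Injective f ∧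
      ∀ a b, H.Adj a b → G.Adj (f (e a)) (f (e b)))
  have hcount : ∀ n (G : SimpleGraph (Fin n)),
      Nat.card {G' : G.Subgraph // Nonempty (G'.coe ≃g H)} ≤ (M n G).card := by
    intro n G
    have hc : (M n G).card = Nat.card (M n G : Set (Fin k → Fin n)) := by simp
    rw [hc]
    let φ : {G' : G.Subgraph // Nonempty (G'.coe ≃g H)} → (M n G : Set (Fin k → Fin n)) :=
      fun G' => ⟨fun i => (G'.2.some.symm (e.symm i)).1, by
        simp only [M, Finset.coe_filter, Finset.mem_univ, true_and, Set.mem_setOf_eq]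
        refine ⟨fun a b hab => ?_, fun a b hab => ?_⟩
        · simpa using Subtype.ext hab
        · simp only [Equiv.symm_apply_apply]
          exact G'.1.adj_sub (SimpleGraph.Subgraph.coe_adj _ _ _ |>.mp
            (G'.2.some.symm.map_adj_iff.mpr hab))⟩
    refine Nat.card_le_card_of_injective φ ?_
    intro G1 G2 h12
    have hφ : ∀ a, (G1.2.some.symm a).1 = (G2.2.some.symm a).1 := by
      intro a
      have := congrFun (congrArg Subtype.val h12) (e a)
      simpa [φ] using this
    have key : ∀ G1 G2 : {G' : G.Subgraph // Nonempty (G'.coe ≃g H)},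
        (∀ a, (G1.2.some.symm a).1 = (G2.2.some.symm a).1) →
        (∀ u, u ∈ G1.1.verts → u ∈ G2.1.verts) ∧ (∀ u v, G1.1.Adj u v → G2.1.Adj u v) := by
      intro G1 G2 hφ
      constructor
      · intro u hu
        have := hφ (G1.2.some ⟨u, hu⟩)
        rw [RelIso.symm_apply_apply] at this
        simp only at this
        rw [this]
        exact Subtype.property _
      · intro u v huv
        have hu := G1.1.edge_vert huv
        have hv := G1.1.edge_vert huv.symm
        have h1 := hφ (G1.2.some ⟨u, hu⟩)
        have h2 := hφ (G1.2.some ⟨v, hv⟩)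
        rw [RelIso.symm_apply_apply] at h1 h2
        simp only at h1 h2
        rw [h1, h2]
        rw [← SimpleGraph.Subgraph.coe_adj, G2.2.some.symm.map_adj_iff, G1.2.some.map_adj_iff]
        exact huv
    apply Subtype.ext
    have k1 := key G1 G2 hφ
    have k2 := key G2 G1 (fun a => (hφ a).symm)
    ext u v
    · exact ⟨k1.1 u, k2.1 u⟩
    · exact ⟨k1.2 u v, k2.2 u v⟩
  by_cases hη1 : 1 ≤ η
  · refine ⟨1, fun n hn G h => ?_⟩
    exfalso
    have h1 : (M n G).card < n ^ k := by
      have : (M n G).card < (Finset.univ : Finset (Fin k → Fin n)).card := by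
        apply Finset.card_lt_card
        rw [Finset.ssubset_univ_iff]
        intro hM
        have : (fun _ => ⟨0, hn⟩ : Fin k → Fin n) ∈ M n G := by rw [hM]; simp
        have h2 := (Finset.mem_filter.mp this).2.1 (a₁ := e x) (a₂ := e y) rfl
        exact hxy.ne (e.injective h2)
      simpa using this
    have h2 : ((Nat.card {G' : G.Subgraph // Nonempty (G'.coe ≃g H)} : ℕ) : ℝ) < (n : ℝ) ^ k := by
      exact_mod_cast (hcount n G).trans_lt h1
    have : (n : ℝ) ^ k ≤ η * (n : ℝ) ^ k := le_mul_of_one_le_left (by positivity) hη1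
    linarith
  · push Not at hη1
    obtain ⟨N, hN⟩ := asymptotics η hη hη1 k hk2
    refine ⟨N, fun n hn G h => ?_⟩
    obtain ⟨hn1, hE, hfin⟩ := hN n hn
    set m := ⌊Real.log n⌋₊ with hm
    have : Nonempty (Fin n) := ⟨⟨0, hn1⟩⟩
    have hM : η * (n : ℝ) ^ k ≤ (M n G).card := h.trans (by exact_mod_cast hcount n G)
    obtain ⟨S, v, hS, hinj, -, hcomp⟩ := core (V := Fin n) (J := Fin m) 1 zero_le_one
      (by simpa using hE) k (fun _ => M n G) (m * η) (by
        simp only [Fintype.card_fin, Finset.sum_const, Finset.card_univ, nsmul_eq_mul]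
        rw [mul_assoc]
        gcongr)
    have ht : ⌊η ^ (k ^ 2) * Real.log n⌋₊ ≤ S.card := by
      apply Nat.floor_le_of_le
      linarith
    set t := ⌊η ^ (k ^ 2) * Real.log n⌋₊ with ht'
    let i : Fin t → S := fun s => S.equivFin.symm (Fin.castLE ht s)
    have hi : Function.Injective i := fun a b hab => by
      simpa [i] using hab
    -- facts about pairs in different parts
    have hlt : ∀ a b : Fin k, a < b → ∀ j ∈ S, ∀ j' ∈ S,
        v a j ≠ v b j' ∧ (H.Adj (e.symm a) (e.symm b) → G.Adj (v a j) (v b j')) := by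
      intro a b hab j hj j' hj'
      obtain ⟨z, hz, hz1, hz2⟩ := hcomp b j hj j' hj'
      have hz' := (Finset.mem_filter.mp hz).2
      rw [← hz1 a hab, ← hz2]
      refine ⟨fun h => hab.ne (hz'.1 h), fun hadj => ?_⟩
      simpa using hz'.2 _ _ hadj
    refine ⟨fun p => v (e p.1) (i p.2), ?_, ?_⟩
    · rintro ⟨a, s⟩ ⟨b, s'⟩ hab
      simp only at hab
      rcases lt_trichotomy (e a) (e b) with hlt' | heq | hgt
      · exact absurd hab (hlt _ _ hlt' _ (i s).2 _ (i s').2).1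
      · have hab' := e.injective heq
        subst hab'
        have := hi (Subtype.ext (hinj (e a) (i s).2 (i s').2 hab))
        rw [this]
      · exact absurd hab.symm (hlt _ _ hgt _ (i s').2 _ (i s).2).1
    · rintro ⟨a, s⟩ ⟨b, s'⟩ hab
      have hab' : H.Adj a b := hab
      rcases lt_trichotomy (e a) (e b) with hlt' | heq | hgt
      · exact (hlt _ _ hlt' _ (i s).2 _ (i s').2).2 (by simpa using hab')
      · exact absurd (e.injective heq) hab'.ne
      · exact ((hlt _ _ hgt _ (i s').2 _ (i s).2).2 (by simpa using hab'.symm)).symm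
end
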